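/- arXiv:2203.06560 — 8 statements merged into one kernel-verified Lean document; each statement's English description precedes it below -/
import Mathlib

section
/- Let D ≥ 2, let v ∈ ℝ^D with ‖v‖₂ = 1, and let λ ∈ [0,1]. Let ξ be uniformly distributed on the unit sphere of ℝ^D and define u = √λ·v + √(1−λ)·r, where r = (I − vv^⊤)ξ / ‖(I − vv^⊤)ξ‖₂ (well-defined almost surely, since (I − vv^⊤)ξ ≠ 0 almost surely). Then ‖u‖₂ = 1 almost surely and E[uu^⊤] = λ·vv^⊤ + ((1−λ)/(D−1))·(I − vv^⊤). -/
open MeasureTheory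
open scoped RealInnerProductSpace

/-- A random vector `ξ` is uniformly distributed on the unit sphere of `ℝⁿ` iff it is
measurable, takes values on the unit sphere almost surely, and its distribution is
invariant under every linear isometry (rotation/reflection) of `ℝⁿ`. -/
def IsUniformOnSphere {n : ℕ} {Ω : Type*} [MeasurableSpace Ω]
    (μ : Measure Ω) (ξ : Ω → EuclideanSpace ℝ (Fin n)) : Prop :=
  Measurable ξ ∧ (∀ᵐ ω ∂μ, ‖ξ ω‖ = 1) ∧
    ∀ T : EuclideanSpace ℝ (Fin n) ≃ₗᵢ[ℝ] EuclideanSpace ℝ (Fin n),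
      Measure.map (fun ω => T (ξ ω)) μ = Measure.map ξ μ

/-!
The law of `ξ` is invariant under reflections in hyperplanes. Reflections in hyperplanes containing
`v` commute with `x ↦ (I − vvᵀ)x / ‖(I − vvᵀ)x‖`, and every hyperplane reflection of `vᗮ` arises
from one of them, so the law of `r` is a reflection-invariant probability on the unit sphere of
`vᗮ`. Such a law is centred, as `w ↦ -w` under the reflection in `wᗮ`, and its second moment
`E⟪x, r⟫²` depends only on `‖x‖`, as two vectors of equal norm are exchanged by a reflection;
summing over an orthonormal basis and polarizing gives `E⟪x, r⟫⟪y, r⟫ = ⟪x, y⟫ / (D − 1)` on `vᗮ`.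
Almost surely `(I − vvᵀ)ξ ≠ 0`, because otherwise the law of `ξ / ‖ξ‖` would have an atom at `v` or
`-v`, whereas reflections give all points of the infinite unit sphere the same mass.
-/

open Module

theorem integral_add_mul_mul_add_mul_of_integral_eq_zero {Ω : Type*} [MeasurableSpace Ω]
    {μ : Measure Ω} [IsProbabilityMeasure μ] {f g : Ω → ℝ} (hf : Integrable f μ)
    (hg : Integrable g μ) (hfg : Integrable (fun ω => f ω * g ω) μ) (hf0 : ∫ ω, f ω ∂μ = 0)
    (hg0 : ∫ ω, g ω ∂μ = 0) (a b c d : ℝ) :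
    ∫ ω, (a + c * f ω) * (b + d * g ω) ∂μ = a * b + c * d * ∫ ω, f ω * g ω ∂μ := by
  have hlin : Integrable (fun ω => b * c * f ω + a * d * g ω) μ :=
    (hf.const_mul _).add (hg.const_mul _)
  calc ∫ ω, (a + c * f ω) * (b + d * g ω) ∂μ
      = ∫ ω, a * b + ((b * c * f ω + a * d * g ω) + c * d * (f ω * g ω)) ∂μ := by
        congr with ω; ring
    _ = a * b + ((b * c * 0 + a * d * 0) + c * d * ∫ ω, f ω * g ω ∂μ) := by
        rw [integral_add (integrable_const _) (by exact hlin.add (hfg.const_mul _)),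
          integral_add hlin (hfg.const_mul _), integral_add (hf.const_mul _) (hg.const_mul _)]
        simp only [integral_const, integral_const_mul, hf0, hg0, probReal_univ, one_smul]
    _ = a * b + c * d * ∫ ω, f ω * g ω ∂μ := by ring

section

variable {V W : Type*} [NormedAddCommGroup V] [NormedSpace ℝ V] [NormedAddCommGroup W]
  [NormedSpace ℝ W]

theorem linearIsometry_map_normalize {𝓕 : Type*} [FunLike 𝓕 V W] [LinearIsometryClass 𝓕 ℝ V W]
    (T : 𝓕) (x : V) : T (NormedSpace.normalize x) = NormedSpace.normalize (T x) := by
  simp only [NormedSpace.normalize, map_smul, SemilinearIsometryClass.norm_map]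

theorem measurable_normalize [MeasurableSpace V] [BorelSpace V] :
    Measurable (NormedSpace.normalize : V → V) :=
  measurable_norm.inv.smul measurable_id

theorem infinite_sphere (hV : 1 < Module.rank ℝ V) (x : V) {ρ : ℝ} (hρ : 0 < ρ) :
    (Metric.sphere x ρ).Infinite := by
  have : Nontrivial V := rank_pos_iff_nontrivial.mp (zero_lt_one.trans hV)
  obtain ⟨y, hy⟩ := exists_norm_eq V hρ.le
  have hy0 : y ≠ 0 := norm_ne_zero_iff.mp (hy ▸ hρ.ne')
  have : IsAddTorsionFree V := .of_isTorsionFree ℝ V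
  refine (isPreconnected_sphere hV x ρ).infinite_of_nontrivial
    ⟨x + y, by simp [hy], x + -y, by simp [hy], fun h => hy0 ?_⟩
  exact self_eq_neg.mp (add_left_cancel h)

end

section

variable {E : Type*} [NormedAddCommGroup E] [InnerProductSpace ℝ E]

theorem reflection_orthogonal_span_singleton_apply (w x : E) :
    (ℝ ∙ w)ᗮ.reflection x = x - (2 * (⟪w, x⟫ / ‖w‖ ^ 2)) • w := by
  rw [Submodule.reflection_orthogonal_apply, Submodule.reflection_singleton_apply, neg_sub,
    mul_smul, ofNat_smul_eq_nsmul]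
  simp only [RCLike.ofReal_real_eq_id, id_eq, two_smul]

theorem orthogonalProjectionOnto_reflection_orthogonal_span_singleton (K : Submodule ℝ E)
    [K.HasOrthogonalProjection] (w : K) (x : E) :
    K.orthogonalProjectionOnto ((ℝ ∙ (w : E))ᗮ.reflection x) =
      (ℝ ∙ w)ᗮ.reflection (K.orthogonalProjectionOnto x) := by
  simp only [reflection_orthogonal_span_singleton_apply, map_sub, map_smul,
    Submodule.orthogonalProjectionOnto_mem_subspace_eq_self, Submodule.coe_norm,
    Submodule.inner_orthogonalProjectionOnto_eq_of_mem_left]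

theorem norm_sqrt_smul_add_sqrt_smul {v r : E} (hv : ‖v‖ = 1) (hr : ‖r‖ = 1)
    (hvr : ⟪v, r⟫ = 0) {t : ℝ} (ht : t ∈ Set.Icc (0 : ℝ) 1) :
    ‖√t • v + √(1 - t) • r‖ = 1 := by
  have hsq : ‖√t • v + √(1 - t) • r‖ ^ 2 = 1 := by
    rw [norm_add_sq_real, inner_smul_left, inner_smul_right, hvr, norm_smul, norm_smul, hv, hr]
    simp [Real.sq_sqrt ht.1, Real.sq_sqrt (sub_nonneg.mpr ht.2)]
  exact (pow_eq_one_iff_of_nonneg (norm_nonneg _) two_ne_zero).mp hsq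

/-- The normalized component of `x` orthogonal to `v`, as a vector of the hyperplane `vᗮ`. It is
`0` when `x` is a multiple of `v`. -/
noncomputable def residualDirection (v x : E) : (ℝ ∙ v)ᗮ :=
  NormedSpace.normalize ((ℝ ∙ v)ᗮ.orthogonalProjectionOnto x)

theorem coe_orthogonalProjectionOnto_orthogonal_span_singleton {v : E} (hv : ‖v‖ = 1) (x : E) :
    ((ℝ ∙ v)ᗮ.orthogonalProjectionOnto x : E) = x - ⟪v, x⟫ • v := by
  rw [← Submodule.starProjection_apply, Submodule.starProjection_orthogonal_val,
    Submodule.starProjection_unit_singleton ℝ hv]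

theorem inner_orthogonalProjectionOnto_orthogonal_span_singleton {v : E} (hv : ‖v‖ = 1) (y z : E) :
    ⟪(ℝ ∙ v)ᗮ.orthogonalProjectionOnto y, (ℝ ∙ v)ᗮ.orthogonalProjectionOnto z⟫ =
      ⟪y, z⟫ - ⟪y, v⟫ * ⟪z, v⟫ := by
  rw [Submodule.inner_orthogonalProjectionOnto_eq_of_mem_right,
    coe_orthogonalProjectionOnto_orthogonal_span_singleton hv, inner_sub_right, inner_smul_right,
    real_inner_comm z v, mul_comm]

theorem finrank_orthogonal_span_singleton_eq_sub_one [FiniteDimensional ℝ E] {v : E} (hv : v ≠ 0) :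
    (finrank ℝ (ℝ ∙ v)ᗮ : ℝ) = finrank ℝ E - 1 := by
  rw [← (ℝ ∙ v).finrank_add_finrank_orthogonal, finrank_span_singleton hv]
  push_cast
  ring

theorem coe_residualDirection {v : E} (hv : ‖v‖ = 1) (x : E) :
    (residualDirection v x : E) = ‖x - ⟪v, x⟫ • v‖⁻¹ • (x - ⟪v, x⟫ • v) := by
  rw [residualDirection, NormedSpace.normalize, Submodule.coe_smul, Submodule.coe_norm,
    coe_orthogonalProjectionOnto_orthogonal_span_singleton hv]

theorem inner_coe_residualDirection (v x : E) : ⟪v, (residualDirection v x : E)⟫ = 0 :=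
  Submodule.mem_orthogonal_singleton_iff_inner_right.mp (residualDirection v x).2

theorem norm_residualDirection_eq_one_iff {v x : E} :
    ‖residualDirection v x‖ = 1 ↔ x ∉ ℝ ∙ v := by
  rw [residualDirection, NormedSpace.norm_normalize_eq_one_iff, Ne,
    Submodule.orthogonalProjectionOnto_eq_zero_iff, Submodule.orthogonal_orthogonal]

/-- The combination `√t • v + √(1 - t) • r` of `v` and the residual direction `r` of `x`, with
squared cosine `t` to `v`: the vector `u` of the theorem as a function of the sample `x` of `ξ`. -/
noncomputable def tiltedDirection (v : E) (t : ℝ) (x : E) : E :=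
  √t • v + √(1 - t) • (residualDirection v x : E)

theorem norm_tiltedDirection {v x : E} (hv : ‖v‖ = 1) (hr : ‖residualDirection v x‖ = 1) {t : ℝ}
    (ht : t ∈ Set.Icc (0 : ℝ) 1) : ‖tiltedDirection v t x‖ = 1 :=
  norm_sqrt_smul_add_sqrt_smul hv hr (inner_coe_residualDirection v x) ht

variable [MeasurableSpace E] [BorelSpace E]

theorem measurable_residualDirection (v : E) : Measurable (residualDirection v) :=
  measurable_normalize.comp (ContinuousLinearMap.continuous _).measurable

theorem measurable_tiltedDirection (v : E) (t : ℝ) : Measurable (tiltedDirection v t) := by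
  have hρ := (measurable_residualDirection v).subtype_val
  unfold tiltedDirection
  fun_prop

end

/-- A measure invariant under all reflections in hyperplanes through the origin. By the
Cartan–Dieudonné theorem this is, in finite dimension, invariance under all linear isometries;
reflections have the advantage of extending from a subspace to the whole space. -/
def IsReflectionInvariant {E : Type*} [NormedAddCommGroup E] [InnerProductSpace ℝ E]
    [MeasurableSpace E] (ν : Measure E) : Prop :=
  ∀ w : E, MeasurePreserving (ℝ ∙ w)ᗮ.reflection ν ν

namespace IsReflectionInvariant

variable {E : Type*} [NormedAddCommGroup E] [InnerProductSpace ℝ E] [MeasurableSpace E]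
  {ν : Measure E}

theorem map {F : Type*} [NormedAddCommGroup F] [InnerProductSpace ℝ F] [MeasurableSpace F]
    [BorelSpace F] (hν : IsReflectionInvariant ν) {f : E → F} (hf : Measurable f)
    (hcomm : ∀ w, ∃ w', ∀ x, f ((ℝ ∙ w')ᗮ.reflection x) = (ℝ ∙ w)ᗮ.reflection (f x)) :
    IsReflectionInvariant (ν.map f) := by
  intro w
  obtain ⟨w', hw'⟩ := hcomm w
  have hw : Measurable (ℝ ∙ w)ᗮ.reflection := (ℝ ∙ w)ᗮ.reflection.continuous.measurable
  refine ⟨hw, ?_⟩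
  calc (ν.map f).map (ℝ ∙ w)ᗮ.reflection
      = (ν.map (ℝ ∙ w')ᗮ.reflection).map f := by
        rw [Measure.map_map hw hf, Measure.map_map hf (hν w').measurable]
        exact congrArg (ν.map ·) (funext fun x => (hw' x).symm)
    _ = ν.map f := by rw [(hν w').map_eq]

variable [BorelSpace E]

theorem map_normalize (hν : IsReflectionInvariant ν) :
    IsReflectionInvariant (ν.map NormedSpace.normalize) :=
  hν.map measurable_normalize fun w => ⟨w, fun x => (linearIsometry_map_normalize _ x).symm⟩

theorem map_residualDirection (hν : IsReflectionInvariant ν) (v : E) :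
    IsReflectionInvariant (ν.map (residualDirection v)) :=
  hν.map (measurable_residualDirection v) fun w => ⟨w, fun x => by
    rw [residualDirection, orthogonalProjectionOnto_reflection_orthogonal_span_singleton,
      ← linearIsometry_map_normalize, residualDirection]⟩

theorem measure_singleton_eq (hν : IsReflectionInvariant ν) {x y : E} (hxy : ‖x‖ = ‖y‖) :
    ν {x} = ν {y} := by
  have hpre : (ℝ ∙ (x - y))ᗮ.reflection ⁻¹' {y} = {x} := by
    ext z
    rw [Set.mem_preimage, Set.mem_singleton_iff, Set.mem_singleton_iff,
      ← (ℝ ∙ (x - y))ᗮ.reflection.injective.eq_iff (a := z) (b := x), Submodule.reflection_sub hxy]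
  rw [← hpre, (hν (x - y)).measure_preimage (measurableSet_singleton y).nullMeasurableSet]

theorem measure_singleton_eq_zero [IsFiniteMeasure ν] (hν : IsReflectionInvariant ν)
    (hE : 1 < Module.rank ℝ E) {v : E} (hv : v ≠ 0) : ν {v} = 0 := by
  by_contra hne
  have hinf := infinite_sphere hE (0 : E) (norm_pos_iff.mpr hv)
  refine measure_ne_top ν _ (hinf.meas_eq_top ⟨ν {v}, hne, fun x hx => ?_⟩)
  exact (hν.measure_singleton_eq (mem_sphere_zero_iff_norm.mp hx)).ge

-- Normalization collapses the line through `v`, minus the origin, to two points of the sphere.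
theorem ae_notMem_span_singleton [IsFiniteMeasure ν] (hν : IsReflectionInvariant ν)
    (hE : 1 < Module.rank ℝ E) (h0 : ∀ᵐ x ∂ν, x ≠ 0) (v : E) : ∀ᵐ x ∂ν, x ∉ ℝ ∙ v := by
  have hne : ∀ w : E, w ≠ 0 → ∀ᵐ x ∂ν, NormedSpace.normalize x ≠ w := fun w hw =>
    ae_of_ae_map measurable_normalize.aemeasurable
      (measure_eq_zero_iff_ae_notMem.mp (hν.map_normalize.measure_singleton_eq_zero hE hw))
  rcases eq_or_ne v 0 with rfl | hv
  · simpa using h0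
  have hv' : NormedSpace.normalize v ≠ 0 := (NormedSpace.normalize_eq_zero_iff v).not.mpr hv
  filter_upwards [h0, hne _ hv', hne _ (neg_ne_zero.mpr hv')] with x hx0 hpos hneg hx
  obtain ⟨c, rfl⟩ := Submodule.mem_span_singleton.mp hx
  rcases lt_trichotomy c 0 with hc | rfl | hc
  · exact hneg (NormedSpace.normalize_smul_of_neg hc v)
  · exact hx0 (zero_smul ℝ v)
  · exact hpos (NormedSpace.normalize_smul_of_pos hc v)

theorem ae_norm_residualDirection_eq_one [IsFiniteMeasure ν] (hν : IsReflectionInvariant ν)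
    (hE : 1 < Module.rank ℝ E) (h0 : ∀ᵐ x ∂ν, x ≠ 0) (v : E) :
    ∀ᵐ x ∂ν, ‖residualDirection v x‖ = 1 :=
  (hν.ae_notMem_span_singleton hE h0 v).mono fun _ => norm_residualDirection_eq_one_iff.mpr

theorem integral_comp_reflection {G : Type*} [NormedAddCommGroup G] [NormedSpace ℝ G]
    (hν : IsReflectionInvariant ν) (w : E) (f : E → G) :
    ∫ z, f ((ℝ ∙ w)ᗮ.reflection z) ∂ν = ∫ z, f z ∂ν :=
  (hν w).integral_comp (ℝ ∙ w)ᗮ.reflection.toHomeomorph.measurableEmbedding f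

theorem integral_inner_eq_zero (hν : IsReflectionInvariant ν) (x : E) :
    ∫ z, ⟪x, z⟫ ∂ν = 0 := by
  have hneg : ∀ z, ⟪x, (ℝ ∙ x)ᗮ.reflection z⟫ = -⟪x, z⟫ := fun z => by
    rw [← (ℝ ∙ x)ᗮ.reflection.inner_map_map, Submodule.reflection_reflection,
      Submodule.reflection_orthogonalComplement_singleton_eq_neg, inner_neg_left]
  have h := hν.integral_comp_reflection x fun z => ⟪x, z⟫
  rw [integral_congr_ae (.of_forall hneg), integral_neg] at h
  linarith

theorem integral_inner_residualDirection_eq_zero (hν : IsReflectionInvariant ν) (v y : E) :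
    ∫ x, ⟪y, (residualDirection v x : E)⟫ ∂ν = 0 := by
  have hρ := measurable_residualDirection v
  simp only [← Submodule.inner_orthogonalProjectionOnto_eq_of_mem_right]
  rw [← integral_map hρ.aemeasurable (f := fun z => ⟪(ℝ ∙ v)ᗮ.orthogonalProjectionOnto y, z⟫)
    (by fun_prop), (hν.map_residualDirection v).integral_inner_eq_zero]

theorem integral_inner_sq_eq (hν : IsReflectionInvariant ν) {x y : E} (hxy : ‖x‖ = ‖y‖) :
    ∫ z, ⟪x, z⟫ ^ 2 ∂ν = ∫ z, ⟪y, z⟫ ^ 2 ∂ν := by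
  have h := hν.integral_comp_reflection (x - y) fun z => ⟪y, z⟫ ^ 2
  have hinner : ∀ z, ⟪y, (ℝ ∙ (x - y))ᗮ.reflection z⟫ = ⟪x, z⟫ := fun z => by
    rw [← (ℝ ∙ (x - y))ᗮ.reflection.inner_map_map x z, Submodule.reflection_sub hxy]
  simpa only [hinner] using h

variable [FiniteDimensional ℝ E]

theorem finrank_mul_integral_inner_sq (hν : IsReflectionInvariant ν) (h2 : MemLp id 2 ν) (x : E) :
    finrank ℝ E * ∫ z, ⟪x, z⟫ ^ 2 ∂ν = ‖x‖ ^ 2 * ∫ z, ‖z‖ ^ 2 ∂ν := by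
  let b := stdOrthonormalBasis ℝ E
  have hb : ∀ i, ∫ z, ⟪x, z⟫ ^ 2 ∂ν = ‖x‖ ^ 2 * ∫ z, ⟪b i, z⟫ ^ 2 ∂ν := fun i => by
    have hnorm : ‖x‖ = ‖‖x‖ • b i‖ := by simp [norm_smul]
    rw [hν.integral_inner_sq_eq hnorm, ← integral_const_mul]
    simp only [real_inner_smul_left, mul_pow]
  calc finrank ℝ E * ∫ z, ⟪x, z⟫ ^ 2 ∂ν
      = ∑ _i : Fin (finrank ℝ E), ∫ z, ⟪x, z⟫ ^ 2 ∂ν := by simp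
    _ = ‖x‖ ^ 2 * ∑ i, ∫ z, ⟪b i, z⟫ ^ 2 ∂ν := by
      rw [Finset.mul_sum]; exact Finset.sum_congr rfl fun i _ => hb i
    _ = ‖x‖ ^ 2 * ∫ z, ‖z‖ ^ 2 ∂ν := by
      have hint : ∀ i, Integrable (fun z => ⟪b i, z⟫ ^ 2) ν := fun i =>
        (h2.const_inner (b i)).integrable_sq
      rw [← integral_finsetSum _ fun i _ => hint i]
      simp only [b.sum_sq_inner_right]

theorem finrank_mul_integral_inner_mul_inner (hν : IsReflectionInvariant ν) (h2 : MemLp id 2 ν)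
    (x y : E) :
    finrank ℝ E * ∫ z, ⟪x, z⟫ * ⟪y, z⟫ ∂ν = ⟪x, y⟫ * ∫ z, ‖z‖ ^ 2 ∂ν := by
  have hpol : ∀ z, ⟪x, z⟫ * ⟪y, z⟫ = (⟪x + y, z⟫ ^ 2 - ⟪x - y, z⟫ ^ 2) / 4 := fun z => by
    rw [inner_add_left, inner_sub_left]; ring
  have hsq : ∀ w, Integrable (fun z => ⟪w, z⟫ ^ 2) ν := fun w => (h2.const_inner w).integrable_sq
  rw [integral_congr_ae (.of_forall hpol), integral_div, integral_sub (hsq _) (hsq _)]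
  linear_combination (hν.finrank_mul_integral_inner_sq h2 (x + y)
    - hν.finrank_mul_integral_inner_sq h2 (x - y)) / 4
    + (∫ z, ‖z‖ ^ 2 ∂ν) / 4 * (norm_add_sq_real x y - norm_sub_sq_real x y)

theorem integral_inner_mul_inner_eq_div_finrank [IsProbabilityMeasure ν]
    (hν : IsReflectionInvariant ν) (h1 : ∀ᵐ z ∂ν, ‖z‖ = 1) (x y : E) :
    ∫ z, ⟪x, z⟫ * ⟪y, z⟫ ∂ν = ⟪x, y⟫ / finrank ℝ E := by
  have h2 : MemLp id 2 ν := .of_bound aestronglyMeasurable_id 1 (h1.mono fun _ hz => hz.le)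
  have hsq : ∫ z, ‖z‖ ^ 2 ∂ν = 1 := by
    rw [integral_congr_ae (h1.mono fun z hz => by rw [hz, one_pow]), integral_const, probReal_univ,
      one_smul]
  obtain ⟨z, hz⟩ := h1.exists
  have : Nontrivial E := ⟨z, 0, norm_ne_zero_iff.mp (hz ▸ one_ne_zero)⟩
  rw [eq_div_iff (Nat.cast_ne_zero.mpr finrank_pos.ne'), mul_comm,
    hν.finrank_mul_integral_inner_mul_inner h2, hsq, mul_one]

theorem integral_inner_mul_inner_residualDirection [IsProbabilityMeasure ν]
    (hν : IsReflectionInvariant ν) (hE : 1 < Module.rank ℝ E) (h0 : ∀ᵐ x ∂ν, x ≠ 0) {v : E}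
    (hv : ‖v‖ = 1) (y z : E) :
    ∫ x, ⟪y, (residualDirection v x : E)⟫ * ⟪z, (residualDirection v x : E)⟫ ∂ν =
      (⟪y, z⟫ - ⟪y, v⟫ * ⟪z, v⟫) / (finrank ℝ E - 1) := by
  have hρ := measurable_residualDirection v
  let P := (ℝ ∙ v)ᗮ.orthogonalProjectionOnto
  have : IsProbabilityMeasure (ν.map (residualDirection v)) :=
    Measure.isProbabilityMeasure_map hρ.aemeasurable
  have hunit : ∀ᵐ w ∂ν.map (residualDirection v), ‖w‖ = 1 :=
    (ae_map_iff hρ.aemeasurable (measurableSet_eq_fun measurable_norm measurable_const)).mpr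
      (hν.ae_norm_residualDirection_eq_one hE h0 v)
  calc ∫ x, ⟪y, (residualDirection v x : E)⟫ * ⟪z, (residualDirection v x : E)⟫ ∂ν
      = ∫ w, ⟪P y, w⟫ * ⟪P z, w⟫ ∂ν.map (residualDirection v) := by
        rw [integral_map hρ.aemeasurable (by fun_prop)]
        simp only [P, Submodule.inner_orthogonalProjectionOnto_eq_of_mem_right]
    _ = ⟪P y, P z⟫ / finrank ℝ (ℝ ∙ v)ᗮ :=
        (hν.map_residualDirection v).integral_inner_mul_inner_eq_div_finrank hunit _ _
    _ = (⟪y, z⟫ - ⟪y, v⟫ * ⟪z, v⟫) / (finrank ℝ E - 1) := by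
        rw [inner_orthogonalProjectionOnto_orthogonal_span_singleton hv,
          finrank_orthogonal_span_singleton_eq_sub_one (norm_ne_zero_iff.mp (hv ▸ one_ne_zero))]

theorem integral_inner_mul_inner_tiltedDirection [IsProbabilityMeasure ν]
    (hν : IsReflectionInvariant ν) (hE : 1 < Module.rank ℝ E) (h0 : ∀ᵐ x ∂ν, x ≠ 0) {v : E}
    (hv : ‖v‖ = 1) {t : ℝ} (ht : t ∈ Set.Icc (0 : ℝ) 1) (y z : E) :
    ∫ x, ⟪y, tiltedDirection v t x⟫ * ⟪z, tiltedDirection v t x⟫ ∂ν =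
      t * (⟪y, v⟫ * ⟪z, v⟫) + (1 - t) / (finrank ℝ E - 1) * (⟪y, z⟫ - ⟪y, v⟫ * ⟪z, v⟫) := by
  have h2 : MemLp (fun x => (residualDirection v x : E)) 2 ν :=
    .of_bound (measurable_residualDirection v).subtype_val.aestronglyMeasurable 1
      ((hν.ae_norm_residualDirection_eq_one hE h0 v).mono fun _ hx => hx.le)
  have hy := h2.const_inner (𝕜 := ℝ) y
  have hz := h2.const_inner (𝕜 := ℝ) z
  simp only [tiltedDirection, inner_add_right, inner_smul_right]
  rw [integral_add_mul_mul_add_mul_of_integral_eq_zero (hy.integrable one_le_two)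
    (hz.integrable one_le_two) (hy.integrable_mul hz)
    (hν.integral_inner_residualDirection_eq_zero v y)
    (hν.integral_inner_residualDirection_eq_zero v z),
    hν.integral_inner_mul_inner_residualDirection hE h0 hv, mul_mul_mul_comm,
    Real.mul_self_sqrt ht.1, Real.mul_self_sqrt (sub_nonneg.mpr ht.2)]
  ring

end IsReflectionInvariant

theorem IsUniformOnSphere.isReflectionInvariant_map {n : ℕ} {Ω : Type*} [MeasurableSpace Ω]
    {μ : Measure Ω} {ξ : Ω → EuclideanSpace ℝ (Fin n)} (hξ : IsUniformOnSphere μ ξ) :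
    IsReflectionInvariant (μ.map ξ) := fun w => by
  have hw := (ℝ ∙ w)ᗮ.reflection.continuous.measurable
  exact ⟨hw, (Measure.map_map hw hξ.1).trans (hξ.2.2 _)⟩

theorem stmt4_general {E : Type*} [NormedAddCommGroup E] [InnerProductSpace ℝ E]
    [MeasurableSpace E] [BorelSpace E] (hE : 2 ≤ finrank ℝ E)
    {Ω : Type*} [MeasurableSpace Ω] {μ : Measure Ω} [IsProbabilityMeasure μ]
    {v : E} (hv : ‖v‖ = 1) {lam : ℝ} (hlam : lam ∈ Set.Icc (0 : ℝ) 1)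
    {ξ : Ω → E} (hξm : AEMeasurable ξ μ) (hξ : IsReflectionInvariant (μ.map ξ))
    (hξ0 : ∀ᵐ ω ∂μ, ξ ω ≠ 0) {r : Ω → E}
    (hr : ∀ ω, r ω = ‖ξ ω - ⟪v, ξ ω⟫ • v‖⁻¹ • (ξ ω - ⟪v, ξ ω⟫ • v)) {u : Ω → E}
    (hu : ∀ ω, u ω = √lam • v + √(1 - lam) • r ω) :
    (∀ᵐ ω ∂μ, ξ ω - ⟪v, ξ ω⟫ • v ≠ 0) ∧ (∀ᵐ ω ∂μ, ‖u ω‖ = 1) ∧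
    ∀ x y : E, ∫ ω, ⟪x, u ω⟫ * ⟪y, u ω⟫ ∂μ = lam * (⟪x, v⟫ * ⟪y, v⟫)
      + (1 - lam) / (finrank ℝ E - 1) * (⟪x, y⟫ - ⟪x, v⟫ * ⟪y, v⟫) := by
  have hE' : 1 < Module.rank ℝ E := lt_rank_of_lt_finrank hE
  have : FiniteDimensional ℝ E := .of_finrank_pos (zero_lt_two.trans_le hE)
  have : IsProbabilityMeasure (μ.map ξ) := Measure.isProbabilityMeasure_map hξm
  have h0 : ∀ᵐ x ∂μ.map ξ, x ≠ 0 :=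
    (ae_map_iff hξm (measurableSet_singleton 0).compl).mpr hξ0
  have hres := hξ.ae_norm_residualDirection_eq_one hE' h0 v
  have huξ : ∀ ω, u ω = tiltedDirection v lam (ξ ω) := fun ω => by
    rw [hu, hr, tiltedDirection, coe_residualDirection hv]
  refine ⟨?_, ?_, fun x y => ?_⟩
  · filter_upwards [ae_of_ae_map hξm hres] with ω hω hproj
    rw [Submodule.coe_norm, coe_residualDirection hv, hproj, smul_zero, norm_zero] at hω
    exact zero_ne_one hω
  · filter_upwards [ae_of_ae_map hξm hres] with ω hω
    rw [huξ, norm_tiltedDirection hv hω hlam]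
  · have hm := measurable_tiltedDirection v lam
    simp only [huξ]
    rw [← hξ.integral_inner_mul_inner_tiltedDirection hE' h0 hv hlam,
      integral_map hξm (by fun_prop)]

/-- For a unit vector `v`, `λ ∈ [0,1]`, and `ξ` uniform on the unit sphere of
`ℝᴰ` (`D ≥ 2`), let `r` be the normalization of `(I − vvᵀ)ξ` (a.s. nonzero) and
`u = √λ·v + √(1−λ)·r`. Then `‖u‖ = 1` a.s. and
`E[uuᵀ] = λ·vvᵀ + ((1−λ)/(D−1))·(I − vvᵀ)`. -/
theorem stmt4 {D : ℕ} (hD : 2 ≤ D) {Ω : Type*} [MeasureSpace Ω]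
    [IsProbabilityMeasure (volume : Measure Ω)]
    (v : EuclideanSpace ℝ (Fin D)) (hv : ‖v‖ = 1)
    (lam : ℝ) (hlam : lam ∈ Set.Icc (0 : ℝ) 1)
    (ξ : Ω → EuclideanSpace ℝ (Fin D)) (hξ : IsUniformOnSphere volume ξ)
    (r : Ω → EuclideanSpace ℝ (Fin D))
    (hr : ∀ ω, r ω = ‖ξ ω - (⟪v, ξ ω⟫ : ℝ) • v‖⁻¹ • (ξ ω - (⟪v, ξ ω⟫ : ℝ) • v))
    (u : Ω → EuclideanSpace ℝ (Fin D))
    (hu : ∀ ω, u ω = Real.sqrt lam • v + Real.sqrt (1 - lam) • r ω) :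
    (∀ᵐ ω, ξ ω - (⟪v, ξ ω⟫ : ℝ) • v ≠ 0) ∧
    (∀ᵐ ω, ‖u ω‖ = 1) ∧
    ∀ j k, (∫ ω, u ω j * u ω k)
      = lam * (v j * v k)
        + (1 - lam) / ((D : ℝ) - 1) * ((if j = k then (1 : ℝ) else 0) - v j * v k) := by
  obtain ⟨hproj, hnorm, hint⟩ := stmt4_general (by simpa using hD) hv hlam hξ.1.aemeasurable
    hξ.isReflectionInvariant_map (hξ.2.1.mono fun _ h => norm_ne_zero_iff.mp (by simp [h])) hr hu
  exact ⟨hproj, hnorm, fun j k => by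
    simpa [EuclideanSpace.inner_single_left, Pi.single_apply, eq_comm] using
      hint (EuclideanSpace.single j 1) (EuclideanSpace.single k 1)⟩
end

section
/- (Optimal λ, Eq. (12)) Fix integers D ≥ 2 and q ≥ 1 and a real α with 0 < α² < 1. Define F : [0,1] → ℝ by F(λ) = (λα² + ((1−λ)/(D−1))(1−α²))² / ((1 − 1/q)(λ²α² + ((1−λ)/(D−1))²(1−α²)) + (1/q)(λα² + ((1−λ)/(D−1))(1−α²))), whose denominator is positive on [0,1]. Define λ* = 0 if α² ≤ 1/(D+2q−2); λ* = (1−α²)(α²(D+2q−2) − 1) / (2α²Dq − α⁴D(D+2q−2) − 1) if 1/(D+2q−2) < α² < (2q−1)/(D+2q−2); and λ* = 1 if α² ≥ (2q−1)/(D+2q−2). Then λ* ∈ [0,1] and F(λ*) ≥ F(λ) for every λ ∈ [0,1]. -/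
/-!
Put `a = α²` and fix a weight `u ∈ [0, 1]`. Cross-multiplying `F u - F l` leaves a nonnegative
multiple of `(l - u)²` minus a positive multiple of `(l - u) * s u`, where `s` is affine and has the
sign of `F'`. The first-order condition `(l - u) * s u ≤ 0` for `l ∈ [0, 1]` is therefore sufficient
for `u` to be a global maximizer. The value `λ*` is the zero of `s` where `s` changes sign from
positive to negative on `[0, 1]`, and otherwise the endpoint towards which `F` increases.
-/

namespace PRGF

variable {D Q a l u : ℝ}

/-- The quadratic form `gᵀCg` of the second-moment matrix `C` with weight `l` on the transfer
direction, at the unit gradient `g`. Here and below `a` is the squared cosine similarity `α²`, and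
the dimension `D` and the number of queries `Q` are real parameters. -/
noncomputable def quadForm (D a l : ℝ) : ℝ :=
  l * a + (1 - l) / (D - 1) * (1 - a)

/-- The quadratic form `gᵀC²g` of the squared second-moment matrix at the unit gradient `g`. -/
noncomputable def quadFormSq (D a l : ℝ) : ℝ :=
  l ^ 2 * a + ((1 - l) / (D - 1)) ^ 2 * (1 - a)

/-- The denominator of the PRGF-BS gain `F`. -/
noncomputable def gainDenom (D Q a l : ℝ) : ℝ :=
  (1 - 1 / Q) * quadFormSq D a l + 1 / Q * quadForm D a l

/-- The PRGF-BS gain `F`, as a function of the weight `l`. -/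
noncomputable def gain (D Q a l : ℝ) : ℝ :=
  quadForm D a l ^ 2 / gainDenom D Q a l

/-- The sign-determining factor of the derivative of the gain:
`F' u = quadForm D a u * gainSlope D Q a u / ((D - 1) ^ 2 * Q * gainDenom D Q a u ^ 2)`. -/
def gainSlope (D Q a u : ℝ) : ℝ :=
  (1 - a) * (a * (D + 2 * Q - 2) - 1)
    - u * (2 * a * D * Q - a ^ 2 * D * (D + 2 * Q - 2) - 1)

/-- The weight `λ*` of Eq. (12). -/
noncomputable def optimalWeight (D Q a : ℝ) : ℝ :=
  if a ≤ 1 / (D + 2 * Q - 2) then 0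
  else if a < (2 * Q - 1) / (D + 2 * Q - 2) then
    (1 - a) * (a * (D + 2 * Q - 2) - 1) / (2 * a * D * Q - a ^ 2 * D * (D + 2 * Q - 2) - 1)
  else 1

lemma quadForm_pos (hD : 1 < D) (ha₀ : 0 < a) (ha₁ : a < 1) (hl : l ∈ Set.Icc (0 : ℝ) 1) :
    0 < quadForm D a l := by
  have : 0 < D - 1 := sub_pos.2 hD
  have : 0 < 1 - a := sub_pos.2 ha₁
  have : 0 ≤ 1 - l := sub_nonneg.2 hl.2
  unfold quadForm
  rcases hl.1.eq_or_lt with rfl | hl₀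
  · simp only [zero_mul, sub_zero, zero_add]
    positivity
  · positivity

lemma quadFormSq_nonneg (ha₀ : 0 ≤ a) (ha₁ : a ≤ 1) : 0 ≤ quadFormSq D a l := by
  have : 0 ≤ 1 - a := sub_nonneg.2 ha₁
  unfold quadFormSq
  positivity

lemma gainDenom_pos (hD : 1 < D) (hQ : 1 ≤ Q) (ha₀ : 0 < a) (ha₁ : a < 1)
    (hl : l ∈ Set.Icc (0 : ℝ) 1) : 0 < gainDenom D Q a l := by
  have hQ₀ : 0 < Q := zero_lt_one.trans_le hQ
  have hQ' : 0 ≤ 1 - 1 / Q := sub_nonneg.2 ((div_le_one hQ₀).2 hQ)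
  exact add_pos_of_nonneg_of_pos (mul_nonneg hQ' (quadFormSq_nonneg ha₀.le ha₁.le))
    (mul_pos (one_div_pos.2 hQ₀) (quadForm_pos hD ha₀ ha₁ hl))

lemma quadForm_sq_mul_gainDenom_sub (hD : D ≠ 1) (hQ : Q ≠ 0) :
    quadForm D a u ^ 2 * gainDenom D Q a l - quadForm D a l ^ 2 * gainDenom D Q a u =
      ((Q - 1) * a * (1 - a) * (l - u) ^ 2 - quadForm D a l * ((l - u) * gainSlope D Q a u)) /
        ((D - 1) ^ 2 * Q) := by
  have hD' : D - 1 ≠ 0 := sub_ne_zero.2 hD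
  simp only [gainDenom, quadForm, quadFormSq, gainSlope]
  field_simp
  ring

lemma gain_le_gain_of_mul_gainSlope_nonpos (hD : 1 < D) (hQ : 1 ≤ Q) (ha₀ : 0 < a) (ha₁ : a < 1)
    (hl : l ∈ Set.Icc (0 : ℝ) 1) (hu : u ∈ Set.Icc (0 : ℝ) 1)
    (hslope : (l - u) * gainSlope D Q a u ≤ 0) : gain D Q a l ≤ gain D Q a u := by
  have hQ₀ : 0 < Q := zero_lt_one.trans_le hQ
  have hquad : 0 ≤ (Q - 1) * a * (1 - a) * (l - u) ^ 2 :=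
    mul_nonneg (mul_nonneg (mul_nonneg (sub_nonneg.2 hQ) ha₀.le) (sub_nonneg.2 ha₁.le))
      (sq_nonneg _)
  have hlin : quadForm D a l * ((l - u) * gainSlope D Q a u) ≤ 0 :=
    mul_nonpos_of_nonneg_of_nonpos (quadForm_pos hD ha₀ ha₁ hl).le hslope
  rw [gain, gain, div_le_div_iff₀ (gainDenom_pos hD hQ ha₀ ha₁ hl)
    (gainDenom_pos hD hQ ha₀ ha₁ hu), ← sub_nonneg,
    quadForm_sq_mul_gainDenom_sub hD.ne' hQ₀.ne']
  exact div_nonneg (sub_nonneg.2 (hlin.trans hquad)) (by positivity)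

lemma gainSlope_zero : gainSlope D Q a 0 = (1 - a) * (a * (D + 2 * Q - 2) - 1) := by
  rw [gainSlope, zero_mul, sub_zero]

lemma gainSlope_one :
    gainSlope D Q a 1 = (D - 1) * a * (a * (D + 2 * Q - 2) - (2 * Q - 1)) := by
  unfold gainSlope
  ring

lemma optimalWeight_cases (hD : 1 < D) (hE : 0 < D + 2 * Q - 2) (ha₀ : 0 < a) (ha₁ : a < 1) :
    optimalWeight D Q a = 0 ∧ gainSlope D Q a 0 ≤ 0 ∨
      optimalWeight D Q a ∈ Set.Icc (0 : ℝ) 1 ∧ gainSlope D Q a (optimalWeight D Q a) = 0 ∨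
      optimalWeight D Q a = 1 ∧ 0 ≤ gainSlope D Q a 1 := by
  have hD' : 0 < D - 1 := sub_pos.2 hD
  have ha' : 0 < 1 - a := sub_pos.2 ha₁
  unfold optimalWeight
  split_ifs with hlow hhigh
  · rw [le_div_iff₀ hE] at hlow
    refine .inl ⟨rfl, ?_⟩
    rw [gainSlope_zero]
    exact mul_nonpos_of_nonneg_of_nonpos ha'.le (sub_nonpos.2 hlow)
  · rw [not_le, div_lt_iff₀ hE] at hlow
    rw [lt_div_iff₀ hE] at hhigh
    have hnum : 0 < (1 - a) * (a * (D + 2 * Q - 2) - 1) := mul_pos ha' (sub_pos.2 hlow)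
    have hone : gainSlope D Q a 1 < 0 := by
      rw [gainSlope_one]
      exact mul_neg_of_pos_of_neg (mul_pos hD' ha₀) (sub_neg.2 hhigh)
    have hlt : (1 - a) * (a * (D + 2 * Q - 2) - 1) <
        2 * a * D * Q - a ^ 2 * D * (D + 2 * Q - 2) - 1 := by
      rwa [gainSlope, one_mul, sub_neg] at hone
    have hden : 0 < 2 * a * D * Q - a ^ 2 * D * (D + 2 * Q - 2) - 1 := hnum.trans hlt
    refine .inr (.inl ⟨⟨div_nonneg hnum.le hden.le, (div_le_one hden).2 hlt.le⟩, ?_⟩)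
    rw [gainSlope, div_mul_cancel₀ _ hden.ne', sub_self]
  · rw [not_lt, div_le_iff₀ hE] at hhigh
    refine .inr (.inr ⟨rfl, ?_⟩)
    rw [gainSlope_one]
    exact mul_nonneg (mul_pos hD' ha₀).le (sub_nonneg.2 hhigh)

lemma optimalWeight_mem_Icc (hD : 1 < D) (hE : 0 < D + 2 * Q - 2) (ha₀ : 0 < a) (ha₁ : a < 1) :
    optimalWeight D Q a ∈ Set.Icc (0 : ℝ) 1 := by
  rcases optimalWeight_cases hD hE ha₀ ha₁ with ⟨h, -⟩ | ⟨h, -⟩ | ⟨h, -⟩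
  · rw [h]
    exact Set.left_mem_Icc.2 zero_le_one
  · exact h
  · rw [h]
    exact Set.right_mem_Icc.2 zero_le_one

lemma sub_optimalWeight_mul_gainSlope_nonpos (hD : 1 < D) (hE : 0 < D + 2 * Q - 2) (ha₀ : 0 < a)
    (ha₁ : a < 1) (hl : l ∈ Set.Icc (0 : ℝ) 1) :
    (l - optimalWeight D Q a) * gainSlope D Q a (optimalWeight D Q a) ≤ 0 := by
  rcases optimalWeight_cases hD hE ha₀ ha₁ with ⟨h, hs⟩ | ⟨-, hs⟩ | ⟨h, hs⟩
  · rw [h, sub_zero]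
    exact mul_nonpos_of_nonneg_of_nonpos hl.1 hs
  · rw [hs, mul_zero]
  · rw [h]
    exact mul_nonpos_of_nonpos_of_nonneg (sub_nonpos.2 hl.2) hs

end PRGF

open PRGF in
theorem stmt6_general {D Q a : ℝ} (hD : 1 < D) (hQ : 1 ≤ Q) (ha₀ : 0 < a) (ha₁ : a < 1) :
    (∀ l ∈ Set.Icc (0 : ℝ) 1, 0 < gainDenom D Q a l) ∧
      optimalWeight D Q a ∈ Set.Icc (0 : ℝ) 1 ∧
      IsMaxOn (gain D Q a) (Set.Icc 0 1) (optimalWeight D Q a) := by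
  have hE : 0 < D + 2 * Q - 2 := by linarith
  have hmem := optimalWeight_mem_Icc hD hE ha₀ ha₁
  exact ⟨fun l hl ↦ gainDenom_pos hD hQ ha₀ ha₁ hl, hmem, fun l hl ↦
    gain_le_gain_of_mul_gainSlope_nonpos hD hQ ha₀ ha₁ hl hmem
      (sub_optimalWeight_mul_gainSlope_nonpos hD hE ha₀ ha₁ hl)⟩

/-- Optimal λ, Eq. (12): For `D ≥ 2`, `q ≥ 1` and `0 < α² < 1`, the function
`F(λ)` (the PRGF-BS gain, whose denominator is positive on `[0,1]`) is maximized over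
`[0,1]` at the piecewise value `λ*` of Eq. (12), and `λ* ∈ [0,1]`. -/
theorem stmt6 (D q : ℕ) (hD : 2 ≤ D) (hq : 1 ≤ q) (α : ℝ)
    (hα0 : 0 < α ^ 2) (hα1 : α ^ 2 < 1)
    (F : ℝ → ℝ)
    (hF : ∀ l : ℝ, F l =
      (l * α ^ 2 + (1 - l) / ((D : ℝ) - 1) * (1 - α ^ 2)) ^ 2 /
        ((1 - 1 / (q : ℝ)) * (l ^ 2 * α ^ 2 + ((1 - l) / ((D : ℝ) - 1)) ^ 2 * (1 - α ^ 2))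
          + (1 / (q : ℝ)) * (l * α ^ 2 + (1 - l) / ((D : ℝ) - 1) * (1 - α ^ 2))))
    (lstar : ℝ)
    (hls : lstar =
      if α ^ 2 ≤ 1 / ((D : ℝ) + 2 * q - 2) then 0
      else if α ^ 2 < (2 * (q : ℝ) - 1) / ((D : ℝ) + 2 * q - 2) then
        (1 - α ^ 2) * (α ^ 2 * ((D : ℝ) + 2 * q - 2) - 1) /
          (2 * α ^ 2 * (D : ℝ) * (q : ℝ) - α ^ 4 * (D : ℝ) * ((D : ℝ) + 2 * q - 2) - 1)
      else 1) :
    (∀ l ∈ Set.Icc (0 : ℝ) 1,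
      0 < (1 - 1 / (q : ℝ)) * (l ^ 2 * α ^ 2 + ((1 - l) / ((D : ℝ) - 1)) ^ 2 * (1 - α ^ 2))
          + (1 / (q : ℝ)) * (l * α ^ 2 + (1 - l) / ((D : ℝ) - 1) * (1 - α ^ 2))) ∧
    lstar ∈ Set.Icc (0 : ℝ) 1 ∧
    ∀ l ∈ Set.Icc (0 : ℝ) 1, F l ≤ F lstar := by
  obtain rfl : F = PRGF.gain D q (α ^ 2) := funext hF
  obtain rfl : lstar = PRGF.optimalWeight D q (α ^ 2) := by rw [hls, PRGF.optimalWeight, ← pow_mul]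
  exact stmt6_general (by exact_mod_cast hD) (by exact_mod_cast hq) hα0 hα1
end

section
/- Fix integers D ≥ 2 and q ≥ 1 and a real α with 0 < α² < 1. Let λ₁ = (1−α²)(α²(D+2q−2) − 1) / (2α²Dq − α⁴D(D+2q−2) − 1), defined whenever the denominator is nonzero. If 1/(D+2q−2) < α² < (2q−1)/(D+2q−2), then the denominator 2α²Dq − α⁴D(D+2q−2) − 1 is positive and λ₁ ∈ (0,1). Conversely, if the denominator is nonzero and λ₁ ∈ (0,1), then 1/(D+2q−2) < α² < (2q−1)/(D+2q−2). -/
/-!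
Write `x = α²`, `t = x (D + 2q - 2)`, `a = (1 - x)(t - 1)` and `b = x (D - 1)(2q - 1 - t)`. The
denominator of `λ₁` is `a + b`, so `λ₁ = a / (a + b)`, which lies in `(0, 1)` exactly when `a` and
`b` have the same strict sign. Since `1 ≤ 2q - 1`, they cannot both be negative, and they are both
positive exactly when `1 < t < 2q - 1`.
-/

theorem stationaryPoint_denom_eq_add {R : Type*} [CommRing R] (D q x : R) :
    2 * x * D * q - x ^ 2 * D * (D + 2 * q - 2) - 1 =
      (1 - x) * (x * (D + 2 * q - 2) - 1) +
        x * (D - 1) * (2 * q - 1 - x * (D + 2 * q - 2)) := by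
  ring

section LinearOrderedField

variable {K : Type*} [Field K] [LinearOrder K] [IsStrictOrderedRing K]

theorem div_add_mem_Ioo_zero_one_iff {a b : K} :
    a / (a + b) ∈ Set.Ioo (0 : K) 1 ↔ 0 < a * b := by
  constructor
  · rintro ⟨hpos, hlt⟩
    have hne : a + b ≠ 0 := (div_ne_zero_iff.mp hpos.ne').2
    have hprod : a * b = a / (a + b) * (1 - a / (a + b)) * (a + b) ^ 2 := by
      field_simp
      ring
    rw [hprod]
    exact mul_pos (mul_pos hpos (sub_pos.mpr hlt)) (sq_pos_of_ne_zero hne)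
  · intro hab
    rcases mul_pos_iff.mp hab with ⟨ha, hb⟩ | ⟨ha, hb⟩
    · have hsum : 0 < a + b := add_pos ha hb
      exact ⟨div_pos ha hsum, (div_lt_one hsum).mpr (lt_add_of_pos_right a hb)⟩
    · have hsum : a + b < 0 := add_neg ha hb
      exact ⟨div_pos_of_neg_of_neg ha hsum,
        (div_lt_one_of_neg hsum).mpr (add_lt_of_neg_right a hb)⟩

theorem stmt7_general {D q x : K} (hD : 1 < D) (hq : 1 ≤ q) (hx0 : 0 < x) (hx1 : x < 1) :
    (1 / (D + 2 * q - 2) < x ∧ x < (2 * q - 1) / (D + 2 * q - 2) →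
      0 < 2 * x * D * q - x ^ 2 * D * (D + 2 * q - 2) - 1 ∧
      (1 - x) * (x * (D + 2 * q - 2) - 1) /
          (2 * x * D * q - x ^ 2 * D * (D + 2 * q - 2) - 1) ∈ Set.Ioo (0 : K) 1) ∧
    (2 * x * D * q - x ^ 2 * D * (D + 2 * q - 2) - 1 ≠ 0 ∧
        (1 - x) * (x * (D + 2 * q - 2) - 1) /
          (2 * x * D * q - x ^ 2 * D * (D + 2 * q - 2) - 1) ∈ Set.Ioo (0 : K) 1 →
      1 / (D + 2 * q - 2) < x ∧ x < (2 * q - 1) / (D + 2 * q - 2)) := by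
  have hS : 0 < D + 2 * q - 2 := by linarith
  have ha : 0 < 1 - x := sub_pos.mpr hx1
  have hb : 0 < x * (D - 1) := mul_pos hx0 (sub_pos.mpr hD)
  have hle : 1 ≤ 2 * q - 1 := by linarith
  have hsign : 0 < (x * (D + 2 * q - 2) - 1) * (2 * q - 1 - x * (D + 2 * q - 2)) ↔
      1 < x * (D + 2 * q - 2) ∧ x * (D + 2 * q - 2) < 2 * q - 1 := by
    rw [← neg_sub _ (2 * q - 1), mul_neg, neg_pos, sub_mul_sub_neg_iff _ hle]
  rw [stationaryPoint_denom_eq_add, div_add_mem_Ioo_zero_one_iff, mul_mul_mul_comm,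
    mul_pos_iff_of_pos_left (mul_pos ha hb), hsign, div_lt_iff₀ hS, lt_div_iff₀ hS]
  refine ⟨fun ht ↦ ⟨?_, ht⟩, And.right⟩
  exact add_pos (mul_pos ha (sub_pos.mpr ht.1)) (mul_pos hb (sub_pos.mpr ht.2))

end LinearOrderedField

/-- For `D ≥ 2`, `q ≥ 1`, `0 < α² < 1`, and the interior stationary point
`λ₁ = (1−α²)(α²(D+2q−2)−1) / (2α²Dq − α⁴D(D+2q−2) − 1)`:
if `1/(D+2q−2) < α² < (2q−1)/(D+2q−2)` then the denominator is positive and `λ₁ ∈ (0,1)`;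
conversely, if the denominator is nonzero and `λ₁ ∈ (0,1)`, then
`1/(D+2q−2) < α² < (2q−1)/(D+2q−2)`. -/
theorem stmt7 (D q : ℕ) (hD : 2 ≤ D) (hq : 1 ≤ q) (α : ℝ)
    (hα0 : 0 < α ^ 2) (hα1 : α ^ 2 < 1) :
    ((1 / ((D : ℝ) + 2 * q - 2) < α ^ 2 ∧
        α ^ 2 < (2 * (q : ℝ) - 1) / ((D : ℝ) + 2 * q - 2)) →
      0 < 2 * α ^ 2 * (D : ℝ) * (q : ℝ) - α ^ 4 * (D : ℝ) * ((D : ℝ) + 2 * q - 2) - 1 ∧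
      (1 - α ^ 2) * (α ^ 2 * ((D : ℝ) + 2 * q - 2) - 1) /
          (2 * α ^ 2 * (D : ℝ) * (q : ℝ) - α ^ 4 * (D : ℝ) * ((D : ℝ) + 2 * q - 2) - 1)
        ∈ Set.Ioo (0 : ℝ) 1) ∧
    ((2 * α ^ 2 * (D : ℝ) * (q : ℝ) - α ^ 4 * (D : ℝ) * ((D : ℝ) + 2 * q - 2) - 1 ≠ 0 ∧
        (1 - α ^ 2) * (α ^ 2 * ((D : ℝ) + 2 * q - 2) - 1) /
            (2 * α ^ 2 * (D : ℝ) * (q : ℝ) - α ^ 4 * (D : ℝ) * ((D : ℝ) + 2 * q - 2) - 1)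
          ∈ Set.Ioo (0 : ℝ) 1) →
      1 / ((D : ℝ) + 2 * q - 2) < α ^ 2 ∧
        α ^ 2 < (2 * (q : ℝ) - 1) / ((D : ℝ) + 2 * q - 2)) := by
  rw [show α ^ 4 = (α ^ 2) ^ 2 from pow_mul α 2 2]
  exact stmt7_general (by exact_mod_cast hD) (by exact_mod_cast hq) hα0 hα1
end

section
/- Fix integers D ≥ 2 and q ≥ 1, and define λ* : [0,1] → [0,1] by λ*(t) = 0 if t ≤ 1/(D+2q−2); λ*(t) = (1−t)(t(D+2q−2) − 1) / (2tDq − t²D(D+2q−2) − 1) if 1/(D+2q−2) < t < (2q−1)/(D+2q−2); and λ*(t) = 1 if t ≥ (2q−1)/(D+2q−2). Then λ* is monotonically non-decreasing on [0,1], and strictly increasing on the interval (1/(D+2q−2), (2q−1)/(D+2q−2)). -/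
/-!
Write `S = D + 2q - 2` and `R = 2q - 1`, so that `D - 1 = S - R`. On the intermediate range
`1 / S < t < R / S` the denominator of `λ*` splits as the numerator `(1 - t) (t S - 1)` plus the
positive term `(S - R) t (R - t S)`, so `λ* = r / (1 + r)` with odds
`r = (S - 1 / t) * ((1 - t) / (R - t S)) / (S - R)`. Both factors of `r` that depend on `t` are
positive and strictly increasing, and `r ↦ r / (1 + r)` is strictly increasing from `[0, ∞)` into
`[0, 1)`.
-/

/-- The coefficient `λ*` of PRGF-BS as a function of `t = α²`, for real parameters `D` and `q`. -/
noncomputable def lambdaStar (D q t : ℝ) : ℝ :=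
  if t ≤ 1 / (D + 2 * q - 2) then 0
  else if t < (2 * q - 1) / (D + 2 * q - 2) then
    (1 - t) * (t * (D + 2 * q - 2) - 1) /
      (2 * t * D * q - t ^ 2 * D * (D + 2 * q - 2) - 1)
  else 1

/-- The odds `λ* / (1 - λ*)` on the intermediate range `1 / S < t < R / S`, where
`S = D + 2q - 2` and `R = 2q - 1`. -/
noncomputable def biasOdds (R S t : ℝ) : ℝ :=
  (S - t⁻¹) * ((1 - t) / (R - t * S)) / (S - R)

section

open Set

section Field

variable {K : Type*} [Field K] [LinearOrder K] [IsStrictOrderedRing K] {R S t x : K}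

theorem strictMonoOn_div_one_add : StrictMonoOn (fun x : K ↦ x / (1 + x)) (Ioi (-1)) := by
  intro x hx y hy hxy
  have hx' : 0 < 1 + x := neg_lt_iff_pos_add'.mp hx
  have hy' : 0 < 1 + y := neg_lt_iff_pos_add'.mp hy
  change x / (1 + x) < y / (1 + y)
  rw [div_lt_div_iff₀ hx' hy']
  linarith

theorem div_one_add_mem_Ico (hx : 0 ≤ x) : x / (1 + x) ∈ Ico 0 1 :=
  ⟨by positivity, (div_lt_one (by positivity)).mpr (lt_one_add x)⟩

theorem strictMonoOn_one_sub_div_sub_mul (hS : 0 < S) (hRS : R < S) :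
    StrictMonoOn (fun t ↦ (1 - t) / (R - t * S)) (Iio (R / S)) := by
  intro s hs t ht hst
  have hs' : 0 < R - s * S := sub_pos.mpr ((lt_div_iff₀ hS).mp hs)
  have ht' : 0 < R - t * S := sub_pos.mpr ((lt_div_iff₀ hS).mp ht)
  change (1 - s) / (R - s * S) < (1 - t) / (R - t * S)
  rw [div_lt_div_iff₀ hs' ht']
  have : (1 - t) * (R - s * S) - (1 - s) * (R - t * S) = (S - R) * (t - s) := by ring
  have : 0 < (S - R) * (t - s) := mul_pos (sub_pos.mpr hRS) (sub_pos.mpr hst)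
  linarith

theorem const_sub_inv_pos (hS : 0 < S) (ht : 1 / S < t) : 0 < S - t⁻¹ :=
  sub_pos.mpr (inv_lt_of_inv_lt₀ hS (one_div S ▸ ht))

theorem one_sub_div_sub_mul_pos (hS : 0 < S) (hRS : R < S) (ht : t < R / S) :
    0 < (1 - t) / (R - t * S) :=
  div_pos (sub_pos.mpr (ht.trans ((div_lt_one hS).mpr hRS)))
    (sub_pos.mpr ((lt_div_iff₀ hS).mp ht))

end Field

section Odds

variable {R S t : ℝ}

theorem biasOdds_pos (hS : 0 < S) (hRS : R < S) (ht : t ∈ Ioo (1 / S) (R / S)) :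
    0 < biasOdds R S t :=
  div_pos (mul_pos (const_sub_inv_pos hS ht.1) (one_sub_div_sub_mul_pos hS hRS ht.2))
    (sub_pos.mpr hRS)

theorem strictMonoOn_biasOdds (hS : 0 < S) (hRS : R < S) :
    StrictMonoOn (biasOdds R S) (Ioo (1 / S) (R / S)) := by
  intro s hs t ht hst
  have hs₀ : 0 < s := (one_div_pos.mpr hS).trans hs.1
  have left_lt : S - s⁻¹ < S - t⁻¹ := sub_lt_sub_left (inv_strictAnti₀ hs₀ hst) S
  have right_lt : (1 - s) / (R - s * S) < (1 - t) / (R - t * S) :=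
    strictMonoOn_one_sub_div_sub_mul hS hRS hs.2 ht.2 hst
  exact div_lt_div_of_pos_right
    (mul_lt_mul'' left_lt right_lt (const_sub_inv_pos hS hs.1).le
      (one_sub_div_sub_mul_pos hS hRS hs.2).le)
    (sub_pos.mpr hRS)

theorem biasOdds_div_one_add (hS : 0 < S) (hRS : R < S) (ht : t ∈ Ioo (1 / S) (R / S)) :
    biasOdds R S t / (1 + biasOdds R S t) =
      (1 - t) * (t * S - 1) / ((1 - t) * (t * S - 1) + (S - R) * t * (R - t * S)) := by
  have ht₀ : 0 < t := (one_div_pos.mpr hS).trans ht.1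
  have hR : 0 < R - t * S := sub_pos.mpr ((lt_div_iff₀ hS).mp ht.2)
  have hD : 0 < S - R := sub_pos.mpr hRS
  have odds_eq : biasOdds R S t = (1 - t) * (t * S - 1) / ((S - R) * t * (R - t * S)) := by
    rw [biasOdds]
    field_simp
  have hM : (S - R) * t * (R - t * S) ≠ 0 := by positivity
  rw [odds_eq, one_add_div hM, div_div_div_cancel_right₀ hM, add_comm]

end Odds

section LambdaStar

variable {D q t : ℝ}

theorem lambdaStar_of_le (ht : t ≤ 1 / (D + 2 * q - 2)) : lambdaStar D q t = 0 :=
  if_pos ht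

theorem lambdaStar_of_ge (h₀ : 1 / (D + 2 * q - 2) < t)
    (h₁ : (2 * q - 1) / (D + 2 * q - 2) ≤ t) : lambdaStar D q t = 1 := by
  rw [lambdaStar, if_neg h₀.not_ge, if_neg h₁.not_gt]

theorem lambdaStar_of_mem_Ioo (hD : 1 < D) (hS : 0 < D + 2 * q - 2)
    (ht : t ∈ Ioo (1 / (D + 2 * q - 2)) ((2 * q - 1) / (D + 2 * q - 2))) :
    lambdaStar D q t =
      biasOdds (2 * q - 1) (D + 2 * q - 2) t / (1 + biasOdds (2 * q - 1) (D + 2 * q - 2) t) := by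
  rw [lambdaStar, if_neg ht.1.not_ge, if_pos ht.2, biasOdds_div_one_add hS (by linarith) ht]
  congr 1
  ring

theorem lambdaStar_mem_Icc (hD : 1 < D) (hS : 0 < D + 2 * q - 2) (t : ℝ) :
    lambdaStar D q t ∈ Icc 0 1 := by
  rcases le_or_gt t (1 / (D + 2 * q - 2)) with h₀ | h₀
  · exact (lambdaStar_of_le h₀).symm ▸ left_mem_Icc.mpr zero_le_one
  rcases le_or_gt ((2 * q - 1) / (D + 2 * q - 2)) t with h₁ | h₁
  · exact (lambdaStar_of_ge h₀ h₁).symm ▸ right_mem_Icc.mpr zero_le_one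
  · rw [lambdaStar_of_mem_Ioo hD hS ⟨h₀, h₁⟩]
    exact Ico_subset_Icc_self
      (div_one_add_mem_Ico (biasOdds_pos hS (by linarith) ⟨h₀, h₁⟩).le)

theorem strictMonoOn_lambdaStar (hD : 1 < D) (hS : 0 < D + 2 * q - 2) :
    StrictMonoOn (lambdaStar D q)
      (Ioo (1 / (D + 2 * q - 2)) ((2 * q - 1) / (D + 2 * q - 2))) := by
  have hRS : 2 * q - 1 < D + 2 * q - 2 := by linarith
  have odds_mapsTo : MapsTo (biasOdds (2 * q - 1) (D + 2 * q - 2))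
      (Ioo (1 / (D + 2 * q - 2)) ((2 * q - 1) / (D + 2 * q - 2))) (Ioi (-1)) :=
    fun _ ht ↦ neg_one_lt_zero.trans (biasOdds_pos hS hRS ht)
  exact (strictMonoOn_div_one_add.comp (strictMonoOn_biasOdds hS hRS) odds_mapsTo).congr
    fun _ ht ↦ (lambdaStar_of_mem_Ioo hD hS ht).symm

theorem monotone_lambdaStar (hD : 1 < D) (hS : 0 < D + 2 * q - 2) :
    Monotone (lambdaStar D q) := by
  intro s t hst
  rcases le_or_gt s (1 / (D + 2 * q - 2)) with hs | hs
  · exact lambdaStar_of_le hs ▸ (lambdaStar_mem_Icc hD hS t).1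
  rcases le_or_gt ((2 * q - 1) / (D + 2 * q - 2)) t with ht | ht
  · exact lambdaStar_of_ge (hs.trans_le hst) ht ▸ (lambdaStar_mem_Icc hD hS s).2
  · exact (strictMonoOn_lambdaStar hD hS).monotoneOn
      ⟨hs, hst.trans_lt ht⟩ ⟨hs.trans_le hst, ht⟩ hst

theorem stmt8_general (hD : 1 < D) (hS : 0 < D + 2 * q - 2) :
    (∀ t, lambdaStar D q t ∈ Icc 0 1) ∧
    Monotone (lambdaStar D q) ∧
    StrictMonoOn (lambdaStar D q)
      (Ioo (1 / (D + 2 * q - 2)) ((2 * q - 1) / (D + 2 * q - 2))) :=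
  ⟨lambdaStar_mem_Icc hD hS, monotone_lambdaStar hD hS, strictMonoOn_lambdaStar hD hS⟩

end LambdaStar

end

/-- For `D ≥ 2` and `q ≥ 1`, the function `λ* : [0,1] → [0,1]` of Eq. (12)
(as a function of `t = α²`) is monotonically non-decreasing on `[0,1]` and strictly
increasing on `(1/(D+2q−2), (2q−1)/(D+2q−2))`. -/
theorem stmt8 (D q : ℕ) (hD : 2 ≤ D) (hq : 1 ≤ q)
    (lstar : ℝ → ℝ)
    (h : ∀ t : ℝ, lstar t =
      if t ≤ 1 / ((D : ℝ) + 2 * q - 2) then 0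
      else if t < (2 * (q : ℝ) - 1) / ((D : ℝ) + 2 * q - 2) then
        (1 - t) * (t * ((D : ℝ) + 2 * q - 2) - 1) /
          (2 * t * (D : ℝ) * (q : ℝ) - t ^ 2 * (D : ℝ) * ((D : ℝ) + 2 * q - 2) - 1)
      else 1) :
    (∀ t ∈ Set.Icc (0 : ℝ) 1, lstar t ∈ Set.Icc (0 : ℝ) 1) ∧
    MonotoneOn lstar (Set.Icc (0 : ℝ) 1) ∧
    StrictMonoOn lstar
      (Set.Ioo (1 / ((D : ℝ) + 2 * q - 2)) ((2 * (q : ℝ) - 1) / ((D : ℝ) + 2 * q - 2))) := by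
  have hD' : (2 : ℝ) ≤ D := by exact_mod_cast hD
  have hq' : (1 : ℝ) ≤ q := by exact_mod_cast hq
  obtain rfl : lstar = lambdaStar D q := funext h
  obtain ⟨mem_Icc, mono, strictMono⟩ :=
    stmt8_general (D := (D : ℝ)) (q := (q : ℝ)) (by linarith) (by linarith)
  exact ⟨fun t _ ↦ mem_Icc t, mono.monotoneOn _, strictMono⟩
end

section
/- Fix an integer D ≥ 2 and a real t with 1/D < t ≤ 1. For each integer q ≥ 1 define λ*_q(t) = 0 if t ≤ 1/(D+2q−2); λ*_q(t) = (1−t)(t(D+2q−2) − 1) / (2tDq − t²D(D+2q−2) − 1) if 1/(D+2q−2) < t < (2q−1)/(D+2q−2); and λ*_q(t) = 1 if t ≥ (2q−1)/(D+2q−2). Then q ↦ λ*_q(t) is monotonically non-increasing: for all integers 1 ≤ q₁ ≤ q₂, λ*_{q₁}(t) ≥ λ*_{q₂}(t). -/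
/-!
Put `s = (2q - 1) - t(d + 2q - 2)`. For `td > 1` and `q ≥ 1` the first branch of the coefficient is
empty, the last one is `s ≤ 0`, and the middle quotient equals `(ts + c) / (tds + c)` with
`c = td - 1 > 0`. This function of `s` is `1` at `s = 0`, so the coefficient is its value at
`max s 0`. It decreases in `s ≥ 0` because `d ≥ 1`, while `max s 0` increases with `q`: for `t ≤ 1`
so does `s`, and for `t > 1` it vanishes identically.
-/

/-- The optimal biased-sampling coefficient `λ*_q(t)` in dimension `d`, with `d` and `q` extended
to real values. -/
noncomputable def optimalCoeff (d t q : ℝ) : ℝ :=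
  if t ≤ 1 / (d + 2 * q - 2) then 0
  else if t < (2 * q - 1) / (d + 2 * q - 2) then
    (1 - t) * (t * (d + 2 * q - 2) - 1) /
      (2 * t * d * q - t ^ 2 * d * (d + 2 * q - 2) - 1)
  else 1

/-- The parameter `s` in which `λ*_q(t)` is a quotient of two affine functions. It is positive
exactly when `t` is below the threshold from which `λ*_q(t) = 1`; the defining inequality is
cleared of its denominator. -/
def thresholdGap (d t q : ℝ) : ℝ :=
  (2 * q - 1) - t * (d + 2 * q - 2)

/-- The middle branch of `λ*_q(t)` as a function of the threshold gap `s`; it takes the value `1`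
at `s = 0`. -/
noncomputable def coeffOfGap (d t s : ℝ) : ℝ :=
  (t * s + (t * d - 1)) / (t * d * s + (t * d - 1))

section

variable {d t q : ℝ}

theorem lt_threshold_iff_thresholdGap_pos (hn : 0 < d + 2 * q - 2) :
    t < (2 * q - 1) / (d + 2 * q - 2) ↔ 0 < thresholdGap d t q := by
  rw [lt_div_iff₀ hn, thresholdGap, sub_pos]

theorem optimalCoeff_middle_eq_coeffOfGap :
    (1 - t) * (t * (d + 2 * q - 2) - 1) /
        (2 * t * d * q - t ^ 2 * d * (d + 2 * q - 2) - 1) =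
      coeffOfGap d t (thresholdGap d t q) := by
  unfold coeffOfGap thresholdGap
  congr 1 <;> ring

theorem coeffOfGap_zero (htd : 1 < t * d) : coeffOfGap d t 0 = 1 := by
  simp [coeffOfGap, div_self (sub_pos.mpr htd).ne']

theorem optimalCoeff_eq_coeffOfGap_max (hd : 0 < d) (htd : 1 < t * d) (hq : 1 ≤ q) :
    optimalCoeff d t q = coeffOfGap d t (max (thresholdGap d t q) 0) := by
  have ht : 0 < t := pos_of_mul_pos_left (one_pos.trans htd) hd.le
  have hdn : d ≤ d + 2 * q - 2 := by linarith
  have hn : 0 < d + 2 * q - 2 := hd.trans_le hdn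
  have not_first : ¬ t ≤ 1 / (d + 2 * q - 2) := by
    rw [not_le, div_lt_iff₀ hn]
    exact htd.trans_le (mul_le_mul_of_nonneg_left hdn ht.le)
  rw [optimalCoeff, if_neg not_first]
  simp only [lt_threshold_iff_thresholdGap_pos hn]
  split_ifs with hs
  · rw [max_eq_left hs.le, optimalCoeff_middle_eq_coeffOfGap]
  · rw [max_eq_right (not_lt.mp hs), coeffOfGap_zero htd]

theorem antitoneOn_coeffOfGap (hd : 1 ≤ d) (htd : 1 < t * d) :
    AntitoneOn (coeffOfGap d t) (Set.Ici 0) := by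
  have ht : 0 < t := pos_of_mul_pos_left (one_pos.trans htd) (zero_le_one.trans hd)
  have denom_pos {s : ℝ} (hs : 0 ≤ s) : 0 < t * d * s + (t * d - 1) :=
    add_pos_of_nonneg_of_pos (mul_nonneg (by linarith) hs) (sub_pos.mpr htd)
  intro r hr s hs hrs
  rw [coeffOfGap, coeffOfGap, div_le_div_iff₀ (denom_pos hs) (denom_pos hr)]
  have cross_diff_nonneg : 0 ≤ (t * d - 1) * t * (d - 1) * (s - r) :=
    mul_nonneg (mul_nonneg (mul_nonneg (sub_pos.mpr htd).le ht.le) (sub_nonneg.mpr hd))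
      (sub_nonneg.mpr hrs)
  linear_combination cross_diff_nonneg

theorem monotone_thresholdGap (ht : t ≤ 1) : Monotone (thresholdGap d t) := by
  intro p q hpq
  have : 0 ≤ (1 - t) * (q - p) := mul_nonneg (sub_nonneg.mpr ht) (sub_nonneg.mpr hpq)
  unfold thresholdGap
  linear_combination 2 * this

theorem thresholdGap_nonpos (hd : 1 ≤ d) (ht : 1 ≤ t) (hq : 1 ≤ q) :
    thresholdGap d t q ≤ 0 := by
  refine sub_nonpos.mpr ?_
  calc 2 * q - 1 ≤ d + 2 * q - 2 := by linarith
    _ ≤ t * (d + 2 * q - 2) := le_mul_of_one_le_left (by linarith) ht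

theorem monotoneOn_max_thresholdGap (hd : 1 ≤ d) :
    MonotoneOn (fun q ↦ max (thresholdGap d t q) 0) (Set.Ici 1) := by
  intro p hp q _ hpq
  rcases le_total t 1 with ht | ht
  · exact max_le_max_right 0 (monotone_thresholdGap ht hpq)
  · exact max_le ((thresholdGap_nonpos hd ht hp).trans (le_max_right _ _)) (le_max_right _ _)

theorem stmt9_general (hd : 1 ≤ d) (ht : 1 / d < t) :
    AntitoneOn (optimalCoeff d t) (Set.Ici 1) := by
  have hd₀ : 0 < d := one_pos.trans_le hd
  have htd : 1 < t * d := (div_lt_iff₀ hd₀).mp ht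
  have comp_antitone := (antitoneOn_coeffOfGap hd htd).comp_MonotoneOn
    (monotoneOn_max_thresholdGap (t := t) hd) fun _ _ ↦ Set.mem_Ici.mpr (le_max_right _ _)
  exact comp_antitone.congr fun _ hq ↦ (optimalCoeff_eq_coeffOfGap_max hd₀ htd hq).symm

end

/-- For `D ≥ 2` and fixed `t` with `1/D < t ≤ 1`, the optimal biased-sampling
coefficient `λ*_q(t)` of Eq. (12) is monotonically non-increasing in the number of
queries `q`. -/
theorem stmt9 (D : ℕ) (hD : 2 ≤ D) (t : ℝ) (ht1 : 1 / (D : ℝ) < t) (ht2 : t ≤ 1)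
    (lstar : ℕ → ℝ)
    (h : ∀ q : ℕ, 1 ≤ q → lstar q =
      if t ≤ 1 / ((D : ℝ) + 2 * q - 2) then 0
      else if t < (2 * (q : ℝ) - 1) / ((D : ℝ) + 2 * q - 2) then
        (1 - t) * (t * ((D : ℝ) + 2 * q - 2) - 1) /
          (2 * t * (D : ℝ) * (q : ℝ) - t ^ 2 * (D : ℝ) * ((D : ℝ) + 2 * q - 2) - 1)
      else 1) :
    ∀ q₁ q₂ : ℕ, 1 ≤ q₁ → q₁ ≤ q₂ → lstar q₂ ≤ lstar q₁ := by
  intro q₁ q₂ h₁ h₁₂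
  rw [h q₁ h₁, h q₂ (h₁.trans h₁₂)]
  exact stmt9_general (mod_cast one_le_two.trans hD) ht1 (by simpa using h₁)
    (by simpa using h₁.trans h₁₂) (mod_cast h₁₂)
end

section
/- (Optimal μ, Eq. (15)) Let α, b ∈ [0,1] with α(1−b²) + (1−α²)b > 0, and define F : [0,1] → ℝ by F(μ) = (μα + (1−μ)b)² / (μ² + (1−μ)² + 2μ(1−μ)αb), whose denominator is positive on [0,1]. Let μ* = α(1−b²) / (α(1−b²) + (1−α²)b). Then μ* ∈ [0,1], F(μ*) ≥ F(μ) for every μ ∈ [0,1], and F(μ*) = (α² + b² − 2α²b²)/(1 − α²b²). -/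
/-!
For unit vectors `v`, `u`, `g` with `⟪v, g⟫ = α`, `⟪u, g⟫ = b` and `⟪v, u⟫ = c`, the quotient
`(p * α + q * b) ^ 2 / (p ^ 2 + q ^ 2 + 2 * p * q * c)` is the squared cosine of the angle between
`p • v + q • u` and `g`. By Lagrange's identity in the plane of `v` and `u` it is at most the
squared length of the projection of `g` to that plane, and it equals it exactly when
`p • v + q • u` is parallel to that projection, that is, when `p : q = α - b * c : b - α * c`.
The theorem is the case `c = α * b`, `p = μ`, `q = 1 - μ`.
-/

open Set

theorem lagrange_identity_of_two_unit_vectors {R : Type*} [CommRing R] (α b c p q : R) :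
    (α ^ 2 + b ^ 2 - 2 * α * b * c) * (p ^ 2 + q ^ 2 + 2 * p * q * c) =
      (p * α + q * b) ^ 2 * (1 - c ^ 2) + (p * (b - α * c) - q * (α - b * c)) ^ 2 := by
  ring

section LinearOrderedRing

variable {R : Type*} [CommRing R] [LinearOrder R] [IsStrictOrderedRing R] {c p q x y : R}

theorem one_sub_sq_pos (hc : |c| < 1) : 0 < 1 - c ^ 2 :=
  sub_pos.2 ((sq_lt_one_iff_abs_lt_one c).2 hc)

theorem sq_add_sq_add_two_mul_mul_pos (hc : |c| < 1) (hpq : p ≠ 0 ∨ q ≠ 0) :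
    0 < p ^ 2 + q ^ 2 + 2 * p * q * c := by
  have hc' : 0 < 1 - c ^ 2 := one_sub_sq_pos hc
  rcases hpq with hp | hq
  · calc
      0 < (q + p * c) ^ 2 + p ^ 2 * (1 - c ^ 2) := by positivity
      _ = p ^ 2 + q ^ 2 + 2 * p * q * c := by ring
  · calc
      0 < (p + q * c) ^ 2 + q ^ 2 * (1 - c ^ 2) := by positivity
      _ = p ^ 2 + q ^ 2 + 2 * p * q * c := by ring

theorem mem_Icc_zero_one_iff_mul_one_sub_nonneg : x ∈ Icc 0 1 ↔ 0 ≤ x * (1 - x) := by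
  refine ⟨fun ⟨h₀, h₁⟩ ↦ mul_nonneg h₀ (sub_nonneg.2 h₁), fun h ↦ ?_⟩
  rcases mul_nonneg_iff.1 h with ⟨h₀, h₁⟩ | ⟨h₀, h₁⟩
  · exact ⟨h₀, sub_nonneg.1 h₁⟩
  · linarith

theorem mul_one_sub_sq_nonneg (hx : x ∈ Icc 0 1) (hy : y ∈ Icc 0 1) : 0 ≤ x * (1 - y ^ 2) :=
  mul_nonneg hx.1 (sub_nonneg.2 (pow_le_one₀ hy.1 hy.2))

theorem abs_mul_lt_one_of_mem_Icc (hx : x ∈ Icc 0 1) (hy : y ∈ Icc 0 1)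
    (hpos : 0 < x * (1 - y ^ 2) + (1 - x ^ 2) * y) : |x * y| < 1 := by
  have hfactor : x * (1 - y ^ 2) + (1 - x ^ 2) * y = (x + y) * (1 - x * y) := by ring
  rw [abs_of_nonneg (mul_nonneg hx.1 hy.1), ← sub_pos]
  exact pos_of_mul_pos_right (hfactor ▸ hpos) (add_nonneg hx.1 hy.1)

end LinearOrderedRing

section LinearOrderedField

variable {K : Type*} [Field K] [LinearOrder K] [IsStrictOrderedRing K] {α b c p q x y : K}

theorem sq_combination_div_le (hc : |c| < 1) (hpq : p ≠ 0 ∨ q ≠ 0) :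
    (p * α + q * b) ^ 2 / (p ^ 2 + q ^ 2 + 2 * p * q * c) ≤
      (α ^ 2 + b ^ 2 - 2 * α * b * c) / (1 - c ^ 2) := by
  rw [div_le_div_iff₀ (sq_add_sq_add_two_mul_mul_pos hc hpq) (one_sub_sq_pos hc),
    lagrange_identity_of_two_unit_vectors]
  exact le_add_of_nonneg_right (sq_nonneg _)

theorem sq_combination_div_eq_iff (hc : |c| < 1) (hpq : p ≠ 0 ∨ q ≠ 0) :
    (p * α + q * b) ^ 2 / (p ^ 2 + q ^ 2 + 2 * p * q * c) =
        (α ^ 2 + b ^ 2 - 2 * α * b * c) / (1 - c ^ 2) ↔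
      p * (b - α * c) = q * (α - b * c) := by
  rw [div_eq_div_iff (sq_add_sq_add_two_mul_mul_pos hc hpq).ne' (one_sub_sq_pos hc).ne',
    lagrange_identity_of_two_unit_vectors, left_eq_add, sq_eq_zero_iff, sub_eq_zero]

theorem div_add_mem_Icc_zero_one_iff (hxy : x + y ≠ 0) :
    x / (x + y) ∈ Icc 0 1 ↔ 0 ≤ x * y := by
  have hprod : x / (x + y) * (1 - x / (x + y)) = x * y / (x + y) ^ 2 := by
    field_simp
    ring
  rw [mem_Icc_zero_one_iff_mul_one_sub_nonneg, hprod, le_div_iff₀ (by positivity), zero_mul]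

theorem stmt15_general (α b : K) (hαb : |α * b| < 1)
    (hne : α * (1 - b ^ 2) + (1 - α ^ 2) * b ≠ 0)
    (F : K → K)
    (hF : ∀ μ : K, F μ =
      (μ * α + (1 - μ) * b) ^ 2 / (μ ^ 2 + (1 - μ) ^ 2 + 2 * μ * (1 - μ) * α * b))
    (mustar : K)
    (hm : mustar = α * (1 - b ^ 2) / (α * (1 - b ^ 2) + (1 - α ^ 2) * b)) :
    (∀ μ : K, 0 < μ ^ 2 + (1 - μ) ^ 2 + 2 * μ * (1 - μ) * α * b) ∧
    (mustar ∈ Icc 0 1 ↔ 0 ≤ α * (1 - b ^ 2) * (b * (1 - α ^ 2))) ∧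
    (∀ μ : K, F μ ≤ F mustar) ∧
    F mustar = (α ^ 2 + b ^ 2 - 2 * α ^ 2 * b ^ 2) / (1 - α ^ 2 * b ^ 2) := by
  have hweights (μ : K) : μ ≠ 0 ∨ 1 - μ ≠ 0 := by
    by_contra! h
    linarith
  have hopt : mustar * (b - α * (α * b)) = (1 - mustar) * (α - b * (α * b)) := by
    linear_combination (eq_div_iff hne).1 hm
  have hF' (μ : K) : F μ =
      (μ * α + (1 - μ) * b) ^ 2 / (μ ^ 2 + (1 - μ) ^ 2 + 2 * μ * (1 - μ) * (α * b)) := by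
    rw [hF, mul_assoc _ α b]
  have hval := (hF' mustar).trans ((sq_combination_div_eq_iff hαb (hweights mustar)).2 hopt)
  refine ⟨fun μ ↦ ?_, ?_, fun μ ↦ ?_, ?_⟩
  · rw [mul_assoc _ α b]
    exact sq_add_sq_add_two_mul_mul_pos hαb (hweights μ)
  · rw [hm, div_add_mem_Icc_zero_one_iff hne, mul_comm (1 - α ^ 2) b]
  · rw [hval, hF']
    exact sq_combination_div_le hαb (hweights μ)
  · rw [hval]
    ring

end LinearOrderedField

/-- Optimal μ, Eq. (15): For `α, b ∈ [0,1]` with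
`α(1−b²) + (1−α²)b > 0`, the function `F(μ) = (μα+(1−μ)b)²/(μ²+(1−μ)²+2μ(1−μ)αb)`
(whose denominator is positive on `[0,1]`) is maximized over `[0,1]` at
`μ* = α(1−b²)/(α(1−b²)+(1−α²)b) ∈ [0,1]`, with `F(μ*) = (α²+b²−2α²b²)/(1−α²b²)`. -/
theorem stmt15 (α b : ℝ) (hα : α ∈ Set.Icc (0 : ℝ) 1) (hb : b ∈ Set.Icc (0 : ℝ) 1)
    (hpos : 0 < α * (1 - b ^ 2) + (1 - α ^ 2) * b)
    (F : ℝ → ℝ)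
    (hF : ∀ μ : ℝ, F μ =
      (μ * α + (1 - μ) * b) ^ 2 / (μ ^ 2 + (1 - μ) ^ 2 + 2 * μ * (1 - μ) * α * b))
    (mustar : ℝ)
    (hm : mustar = α * (1 - b ^ 2) / (α * (1 - b ^ 2) + (1 - α ^ 2) * b)) :
    (∀ μ ∈ Set.Icc (0 : ℝ) 1, 0 < μ ^ 2 + (1 - μ) ^ 2 + 2 * μ * (1 - μ) * α * b) ∧
    mustar ∈ Set.Icc (0 : ℝ) 1 ∧
    (∀ μ ∈ Set.Icc (0 : ℝ) 1, F μ ≤ F mustar) ∧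
    F mustar = (α ^ 2 + b ^ 2 - 2 * α ^ 2 * b ^ 2) / (1 - α ^ 2 * b ^ 2) := by
  obtain ⟨hden, hmem, hmax, hval⟩ :=
    stmt15_general α b (abs_mul_lt_one_of_mem_Icc hα hb hpos) hpos.ne' F hF mustar hm
  exact ⟨fun μ _ ↦ hden μ,
    hmem.2 (mul_nonneg (mul_one_sub_sq_nonneg hα hb) (mul_one_sub_sq_nonneg hb hα)),
    fun μ _ ↦ hmax μ, hval⟩
end

section
/- (Optimal λ with data-dependent prior, Eq. (22)) Fix integers d ≥ 1 and q ≥ 1 and reals α, A with 0 < α² ≤ 1 and A > 0. Define F : [0,1] → ℝ by F(λ) = (λα² + ((1−λ)/d)A²)² / ((1 − 1/q)(λ²α² + ((1−λ)/d)²A²) + (1/q)(λα² + ((1−λ)/d)A²)), whose denominator is positive on [0,1]. Define λ* = 0 if α² ≤ A²/(d+2q−2); λ* = A²(A² − α²(d+2q−2)) / (A⁴ + α⁴d² − 2A²α²(q + dq − 1)) if A²/(d+2q−2) < α² < A²(2q−1)/d; and λ* = 1 if α² ≥ A²(2q−1)/d. Then λ* ∈ [0,1] and F(λ*) ≥ F(λ)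 for every λ ∈ [0,1]. -/
/-!
Give the prior weight `x = λ` and every basis vector weight `y = (1 - λ) / d`. As `x + d y = 1`, the
denominator of `F` agrees with a quadratic form in `(x, y)`, so `F` is a ratio of quadratic forms
and depends only on the direction of `(x, y)`. Up to positive factors, the value of `F` at `(u, v)`
minus its value at `(x, y)` is a nonnegative multiple of the square of the determinant `x v - u y`
minus that determinant times a linear form in `(u, v)`, the slope of `F` at `(u, v)`. Hence
a point where no feasible direction has positive slope is a global maximum, and a linear form on a
segment leaves three cases: slope nonpositive at `λ = 0`, nonnegative at `λ = 1`, or an interior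
zero.
-/

section Gain

variable {a b d q x y u v l : ℝ}

/-- The value `gᵀ C g` for the unit gradient `g`, where `C` puts weight `x` on the transfer-based
prior and `y` on each basis vector of the subspace; `a = α²` and `b = A²`. -/
def alignment (a b x y : ℝ) : ℝ :=
  x * a + y * b

/-- The denominator of the gain of the estimator with `q` queries, as a function of the weights `x`
on the prior and `y` on each basis vector. The number of queries is allowed to be real. -/
noncomputable def gainDenom (a b q x y : ℝ) : ℝ :=
  (1 - 1 / q) * (x ^ 2 * a + y ^ 2 * b) + 1 / q * alignment a b x y

/-- The gain `F` of the estimator, that is one minus its normalized loss, as a function of the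
weights `x` on the prior and `y` on each basis vector. -/
noncomputable def gain (a b q x y : ℝ) : ℝ :=
  alignment a b x y ^ 2 / gainDenom a b q x y

/-- The slope of the gain at zero weight on the prior, up to a positive factor. -/
def priorMargin (a b d q : ℝ) : ℝ :=
  a * (d + 2 * q - 2) - b

/-- The slope of the gain at zero weight on the subspace, in the direction of increasing subspace
weight, up to a positive factor. -/
def subspaceMargin (a b d q : ℝ) : ℝ :=
  b * (2 * q - 1) - a * d

/-- The derivative of the gain at the weights `(u, v)` in the direction of increasing prior weight,
up to a positive factor. -/
def gainSlope (a b d q u v : ℝ) : ℝ :=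
  b * priorMargin a b d q * v - a * subspaceMargin a b d q * u

/-- The optimal prior weight `λ*` of Eq. (22), with `a = α²` and `b = A²`. -/
noncomputable def optimalWeight (a b d q : ℝ) : ℝ :=
  if a ≤ b / (d + 2 * q - 2) then 0
  else if a < b * (2 * q - 1) / d then
    b * (b - a * (d + 2 * q - 2)) / (b ^ 2 + a ^ 2 * d ^ 2 - 2 * b * a * (q + d * q - 1))
  else 1

lemma one_sub_div_nonneg (hd : 0 ≤ d) (hl : l ≤ 1) : 0 ≤ (1 - l) / d :=
  div_nonneg (sub_nonneg.2 hl) hd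

lemma add_mul_one_sub_div (hd : d ≠ 0) (l : ℝ) : l + d * ((1 - l) / d) = 1 := by
  rw [mul_div_cancel₀ _ hd, add_sub_cancel]

lemma alignment_pos (ha : 0 < a) (hb : 0 < b) (hx : 0 ≤ x) (hy : 0 ≤ y)
    (hxy : x + d * y = 1) : 0 < alignment a b x y := by
  unfold alignment
  rcases hx.eq_or_lt with rfl | hx
  · have hy' : 0 < y := hy.lt_of_ne' (right_ne_zero_of_mul_eq_one (by simpa using hxy))
    positivity
  · positivity

lemma gainDenom_pos (ha : 0 ≤ a) (hb : 0 ≤ b) (hq : 1 ≤ q) (h : 0 < alignment a b x y) :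
    0 < gainDenom a b q x y := by
  have hq' : 0 ≤ 1 - 1 / q := by simpa using inv_le_one_of_one_le₀ hq
  unfold gainDenom
  positivity

lemma alignment_sq_mul_gainDenom_sub (hq : q ≠ 0) (hxy : x + d * y = 1) (huv : u + d * v = 1) :
    alignment a b u v ^ 2 * gainDenom a b q x y - alignment a b x y ^ 2 * gainDenom a b q u v =
      ((q - 1) * (a * b * (a + b)) * (x * v - u * y) ^ 2
        - alignment a b x y * ((x * v - u * y) * gainSlope a b d q u v)) / q := by
  obtain rfl : x = 1 - d * y := eq_sub_of_add_eq hxy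
  obtain rfl : u = 1 - d * v := eq_sub_of_add_eq huv
  unfold gainDenom gainSlope priorMargin subspaceMargin alignment
  field_simp
  ring

lemma gain_le_gain_of_mul_gainSlope_nonpos (ha : 0 < a) (hb : 0 < b) (hq : 1 ≤ q)
    (hx : 0 ≤ x) (hy : 0 ≤ y) (hxy : x + d * y = 1)
    (hu : 0 ≤ u) (hv : 0 ≤ v) (huv : u + d * v = 1)
    (hslope : (x * v - u * y) * gainSlope a b d q u v ≤ 0) :
    gain a b q x y ≤ gain a b q u v := by
  have hSx := alignment_pos ha hb hx hy hxy
  have hSu := alignment_pos ha hb hu hv huv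
  have hq0 : 0 < q := one_pos.trans_le hq
  rw [gain, gain, div_le_div_iff₀ (gainDenom_pos ha.le hb.le hq hSx)
    (gainDenom_pos ha.le hb.le hq hSu), ← sub_nonneg,
    alignment_sq_mul_gainDenom_sub hq0.ne' hxy huv]
  have hsq : 0 ≤ (q - 1) * (a * b * (a + b)) * (x * v - u * y) ^ 2 :=
    mul_nonneg (mul_nonneg (sub_nonneg.2 hq) (by positivity)) (sq_nonneg _)
  have hlin := mul_nonpos_of_nonneg_of_nonpos hSx.le hslope
  exact div_nonneg (by linarith) hq0.le

lemma optimalWeight_cases (hd : 0 < d) (hq : 1 ≤ q) :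
    (optimalWeight a b d q = 0 ∧ priorMargin a b d q ≤ 0) ∨
    (optimalWeight a b d q = b * priorMargin a b d q /
        (b * priorMargin a b d q + d * (a * subspaceMargin a b d q)) ∧
      0 < priorMargin a b d q ∧ 0 < subspaceMargin a b d q) ∨
    (optimalWeight a b d q = 1 ∧ subspaceMargin a b d q ≤ 0) := by
  have hk : 0 < d + 2 * q - 2 := by linarith
  unfold optimalWeight priorMargin subspaceMargin
  split_ifs with hprior hsub
  · exact .inl ⟨rfl, sub_nonpos.2 ((le_div_iff₀ hk).1 hprior)⟩
  · refine .inr (.inl ⟨?_, sub_pos.2 ((div_lt_iff₀ hk).1 (not_le.1 hprior)),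
      sub_pos.2 ((lt_div_iff₀ hd).1 hsub)⟩)
    rw [← neg_div_neg_eq]
    congr 1 <;> ring
  · exact .inr (.inr ⟨rfl, sub_nonpos.2 ((div_le_iff₀ hd).1 (not_lt.1 hsub))⟩)

lemma optimalWeight_mem_Icc (ha : 0 < a) (hb : 0 < b) (hd : 0 < d) (hq : 1 ≤ q) :
    optimalWeight a b d q ∈ Set.Icc 0 1 := by
  rcases optimalWeight_cases hd hq with ⟨h, -⟩ | ⟨h, hprior, hsub⟩ | ⟨h, -⟩ <;> rw [h]
  · exact Set.left_mem_Icc.2 zero_le_one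
  · exact ⟨by positivity, div_le_one_of_le₀ (le_add_of_nonneg_right (by positivity))
      (by positivity)⟩
  · exact Set.right_mem_Icc.2 zero_le_one

lemma gainSlope_eq_zero_of_eq_div (hd : d ≠ 0)
    (h : b * priorMargin a b d q + d * (a * subspaceMargin a b d q) ≠ 0)
    (hl : l = b * priorMargin a b d q /
      (b * priorMargin a b d q + d * (a * subspaceMargin a b d q))) :
    gainSlope a b d q l ((1 - l) / d) = 0 := by
  rw [gainSlope, hl, one_sub_div h, add_sub_cancel_left, div_right_comm, mul_div_cancel_left₀ _ hd]
  ring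

lemma sub_mul_gainSlope_optimalWeight_nonpos (ha : 0 < a) (hb : 0 < b) (hd : 0 < d) (hq : 1 ≤ q)
    (hl : l ∈ Set.Icc 0 1) :
    (l - optimalWeight a b d q) *
      gainSlope a b d q (optimalWeight a b d q) ((1 - optimalWeight a b d q) / d) ≤ 0 := by
  rcases optimalWeight_cases hd hq with ⟨h, hprior⟩ | ⟨h, hprior, hsub⟩ | ⟨h, hsub⟩
  · have hslope : gainSlope a b d q 0 ((1 - 0) / d) = b / d * priorMargin a b d q := by
      unfold gainSlope
      ring
    rw [h, hslope]
    exact mul_nonpos_of_nonneg_of_nonpos (sub_nonneg.2 hl.1)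
      (mul_nonpos_of_nonneg_of_nonpos (by positivity) hprior)
  · rw [gainSlope_eq_zero_of_eq_div hd.ne' (by positivity) h, mul_zero]
  · have hslope : gainSlope a b d q 1 ((1 - 1) / d) = -(a * subspaceMargin a b d q) := by
      unfold gainSlope
      ring
    rw [h, hslope]
    exact mul_nonpos_of_nonpos_of_nonneg (sub_nonpos.2 hl.2)
      (neg_nonneg.2 (mul_nonpos_of_nonneg_of_nonpos ha.le hsub))

lemma isMaxOn_gain_optimalWeight (ha : 0 < a) (hb : 0 < b) (hd : 0 < d) (hq : 1 ≤ q) :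
    IsMaxOn (fun l ↦ gain a b q l ((1 - l) / d)) (Set.Icc 0 1) (optimalWeight a b d q) := by
  intro l hl
  have hm := optimalWeight_mem_Icc ha hb hd hq
  refine gain_le_gain_of_mul_gainSlope_nonpos ha hb hq hl.1 (one_sub_div_nonneg hd.le hl.2)
    (add_mul_one_sub_div hd.ne' l)
    hm.1 (one_sub_div_nonneg hd.le hm.2) (add_mul_one_sub_div hd.ne' _) ?_
  have hdet (t m : ℝ) : t * ((1 - m) / d) - m * ((1 - t) / d) = (t - m) / d := by ring
  rw [hdet, div_mul_eq_mul_div]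
  exact div_nonpos_of_nonpos_of_nonneg
    (sub_mul_gainSlope_optimalWeight_nonpos ha hb hd hq hl) hd.le

lemma gainDenom_one_sub_div_pos (ha : 0 < a) (hb : 0 < b) (hd : 0 < d) (hq : 1 ≤ q)
    (hl : l ∈ Set.Icc 0 1) : 0 < gainDenom a b q l ((1 - l) / d) :=
  gainDenom_pos ha.le hb.le hq <| alignment_pos ha hb hl.1
    (one_sub_div_nonneg hd.le hl.2) (add_mul_one_sub_div hd.ne' l)

theorem stmt16_general (ha : 0 < a) (hb : 0 < b) (hd : 0 < d) (hq : 1 ≤ q) :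
    (∀ l ∈ Set.Icc (0 : ℝ) 1, 0 < gainDenom a b q l ((1 - l) / d)) ∧
    optimalWeight a b d q ∈ Set.Icc 0 1 ∧
    IsMaxOn (fun l ↦ gain a b q l ((1 - l) / d)) (Set.Icc 0 1) (optimalWeight a b d q) :=
  ⟨fun _ hl ↦ gainDenom_one_sub_div_pos ha hb hd hq hl, optimalWeight_mem_Icc ha hb hd hq,
    isMaxOn_gain_optimalWeight ha hb hd hq⟩

end Gain

/-- Optimal λ with data-dependent prior, Eq. (22): For `d ≥ 1`, `q ≥ 1`,
`0 < α² ≤ 1` and `A > 0`, the function `F(λ)` (whose denominator is positive on `[0,1]`)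
is maximized over `[0,1]` at the piecewise value `λ*` of Eq. (22), and `λ* ∈ [0,1]`. -/
theorem stmt16 (d q : ℕ) (hd : 1 ≤ d) (hq : 1 ≤ q) (α A : ℝ)
    (hα0 : 0 < α ^ 2) (hα1 : α ^ 2 ≤ 1) (hA : 0 < A)
    (F : ℝ → ℝ)
    (hF : ∀ l : ℝ, F l =
      (l * α ^ 2 + (1 - l) / (d : ℝ) * A ^ 2) ^ 2 /
        ((1 - 1 / (q : ℝ)) * (l ^ 2 * α ^ 2 + ((1 - l) / (d : ℝ)) ^ 2 * A ^ 2)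
          + (1 / (q : ℝ)) * (l * α ^ 2 + (1 - l) / (d : ℝ) * A ^ 2)))
    (lstar : ℝ)
    (hls : lstar =
      if α ^ 2 ≤ A ^ 2 / ((d : ℝ) + 2 * q - 2) then 0
      else if α ^ 2 < A ^ 2 * (2 * (q : ℝ) - 1) / (d : ℝ) then
        A ^ 2 * (A ^ 2 - α ^ 2 * ((d : ℝ) + 2 * q - 2)) /
          (A ^ 4 + α ^ 4 * (d : ℝ) ^ 2 - 2 * A ^ 2 * α ^ 2 * ((q : ℝ) + d * q - 1))
      else 1) :
    (∀ l ∈ Set.Icc (0 : ℝ) 1,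
      0 < (1 - 1 / (q : ℝ)) * (l ^ 2 * α ^ 2 + ((1 - l) / (d : ℝ)) ^ 2 * A ^ 2)
          + (1 / (q : ℝ)) * (l * α ^ 2 + (1 - l) / (d : ℝ) * A ^ 2)) ∧
    lstar ∈ Set.Icc (0 : ℝ) 1 ∧
    ∀ l ∈ Set.Icc (0 : ℝ) 1, F l ≤ F lstar := by
  obtain rfl : F = fun l ↦ gain (α ^ 2) (A ^ 2) q l ((1 - l) / d) := funext hF
  obtain rfl : lstar = optimalWeight (α ^ 2) (A ^ 2) d q := by
    simpa only [optimalWeight, ← pow_mul] using hls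
  exact stmt16_general hα0 (pow_pos hA 2) (by exact_mod_cast hd) (by exact_mod_cast hq)
end

section
/- (Optimal μ with data-dependent prior, Eq. (26)) Let A > 0, α ≥ 0, b ≥ 0, and α₁ ∈ ℝ satisfy |α₁|·b < A² and α + b > 0, and define F : [0,1] → ℝ by F(μ) = (μα + (1−μ)b)² / (μ² + (1−μ)² + 2μ(1−μ)(α₁/A²)b), whose denominator is positive on [0,1]. Let μ* = (A²α − α₁b²) / ((A² − α₁b)(α + b)) (well-defined since A² − α₁b > 0), and assume μ* ∈ [0,1]. Then F(μ*) ≥ F(μ) for every μ ∈ [0,1], and F(μ*) = (A⁴(α² + b²) − 2A²α·α₁·b²) / (A⁴ − α₁²b²). -/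
/-!
After clearing `A²`, the denominator of `F` is a positive definite binary quadratic form `Q` in the
weights `(μ, 1 - μ)`, and its numerator is the square of a linear form with coefficients `(α, b)`.
A two-variable Lagrange identity writes the product of `Q` and its adjugate form as the determinant
times the squared linear form plus a square. Dropping that last square bounds `F` by a constant, and
the square vanishes for exactly one ratio of the weights, the one of `μ*`.
-/

/-- The binary quadratic form `(x, y) ↦ p x² + 2 c x y + q y²`, with Gram matrix `!![p, c; c, q]`,
used for the squared length of a combination of two directions with weights `x` and `y`.
The adjugate form has Gram matrix `!![q, -c; -c, p]` and is thus `binaryForm q (-c) p`. -/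
def binaryForm {R : Type*} [CommRing R] (p c q x y : R) : R :=
  p * x ^ 2 + 2 * c * x * y + q * y ^ 2

theorem binaryForm_mul_adjugate {R : Type*} [CommRing R] (p c q x y a b : R) :
    binaryForm p c q x y * binaryForm q (-c) p a b =
      (p * q - c ^ 2) * (x * a + y * b) ^ 2 + (x * (p * b - c * a) - y * (q * a - c * b)) ^ 2 := by
  unfold binaryForm
  ring

theorem sq_div_binaryForm_eq {K : Type*} [Field K] {p c q x y a b : K}
    (hdet : p * q - c ^ 2 ≠ 0) (hQ : binaryForm p c q x y ≠ 0)
    (h : x * (p * b - c * a) = y * (q * a - c * b)) :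
    (x * a + y * b) ^ 2 / binaryForm p c q x y = binaryForm q (-c) p a b / (p * q - c ^ 2) := by
  rw [div_eq_div_iff hQ hdet]
  linear_combination -binaryForm_mul_adjugate p c q x y a b -
    (x * (p * b - c * a) - y * (q * a - c * b)) * h

theorem binaryForm_self_div {K : Type*} [Field K] {p : K} (hp : p ≠ 0) (c x y : K) :
    binaryForm p c p x y / p = x ^ 2 + y ^ 2 + 2 * x * y * (c / p) := by
  unfold binaryForm
  field_simp
  ring

section LinearOrderedField

variable {K : Type*} [Field K] [LinearOrder K] [IsStrictOrderedRing K]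

theorem binaryForm_pos {p c q x y : K} (hp : 0 < p) (hdet : 0 < p * q - c ^ 2)
    (hxy : x ≠ 0 ∨ y ≠ 0) : 0 < binaryForm p c q x y := by
  have complete_square :
      p * binaryForm p c q x y = (p * x + c * y) ^ 2 + (p * q - c ^ 2) * y ^ 2 := by
    unfold binaryForm
    ring
  refine pos_of_mul_pos_right (a := p) ?_ hp.le
  rw [complete_square]
  by_cases hy : y = 0
  · have hx : x ≠ 0 := hxy.resolve_right (not_not_intro hy)
    rw [hy, mul_zero, add_zero]
    positivity
  · positivity

theorem binaryForm_one_sub_pos {p c q : K} (hp : 0 < p) (hdet : 0 < p * q - c ^ 2) (x : K) :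
    0 < binaryForm p c q x (1 - x) := by
  refine binaryForm_pos hp hdet ?_
  by_contra! h
  exact one_ne_zero (by linear_combination h.1 + h.2)

theorem sq_div_binaryForm_le {p c q x y : K} (hdet : 0 < p * q - c ^ 2)
    (hQ : 0 < binaryForm p c q x y) (a b : K) :
    (x * a + y * b) ^ 2 / binaryForm p c q x y ≤ binaryForm q (-c) p a b / (p * q - c ^ 2) := by
  rw [div_le_div_iff₀ hQ hdet]
  linarith [binaryForm_mul_adjugate p c q x y a b,
    sq_nonneg (x * (p * b - c * a) - y * (q * a - c * b))]

theorem stmt18_general (A α b α₁ : K) (h1 : |α₁ * b| < A ^ 2) (h2 : α + b ≠ 0)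
    (F : K → K)
    (hF : ∀ μ : K, F μ =
      (μ * α + (1 - μ) * b) ^ 2 /
        (μ ^ 2 + (1 - μ) ^ 2 + 2 * μ * (1 - μ) * (α₁ / A ^ 2) * b))
    (mustar : K)
    (hm : mustar = (A ^ 2 * α - α₁ * b ^ 2) / ((A ^ 2 - α₁ * b) * (α + b))) :
    (∀ μ : K, 0 < μ ^ 2 + (1 - μ) ^ 2 + 2 * μ * (1 - μ) * (α₁ / A ^ 2) * b) ∧
    0 < A ^ 2 - α₁ * b ∧
    (∀ μ : K, F μ ≤ F mustar) ∧
    F mustar = (A ^ 4 * (α ^ 2 + b ^ 2) - 2 * A ^ 2 * α * α₁ * b ^ 2) /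
      (A ^ 4 - α₁ ^ 2 * b ^ 2) := by
  have hsq : 0 < A ^ 2 := (abs_nonneg _).trans_lt h1
  have hgap : 0 < A ^ 2 - α₁ * b := sub_pos.mpr ((le_abs_self _).trans_lt h1)
  have hdet : 0 < A ^ 2 * A ^ 2 - (α₁ * b) ^ 2 := by
    rw [← sq, sub_pos]
    exact sq_lt_sq.mpr (h1.trans_le (le_abs_self _))
  let Q (μ : K) : K := binaryForm (A ^ 2) (α₁ * b) (A ^ 2) μ (1 - μ)
  have hQ (μ : K) : 0 < Q μ := binaryForm_one_sub_pos hsq hdet μ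
  have hden (μ : K) :
      μ ^ 2 + (1 - μ) ^ 2 + 2 * μ * (1 - μ) * (α₁ / A ^ 2) * b = Q μ / A ^ 2 := by
    rw [binaryForm_self_div hsq.ne', mul_div_right_comm]
    ring
  have hFQ (μ : K) : F μ = A ^ 2 * ((μ * α + (1 - μ) * b) ^ 2 / Q μ) := by
    rw [hF, hden, div_div_eq_mul_div, mul_comm, mul_div_assoc]
  have hstar : mustar * (A ^ 2 * b - α₁ * b * α) = (1 - mustar) * (A ^ 2 * α - α₁ * b * b) := by
    linear_combination (eq_div_iff (mul_ne_zero hgap.ne' h2)).mp hm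
  have hmax : F mustar =
      A ^ 2 * (binaryForm (A ^ 2) (-(α₁ * b)) (A ^ 2) α b / (A ^ 2 * A ^ 2 - (α₁ * b) ^ 2)) := by
    rw [hFQ, sq_div_binaryForm_eq hdet.ne' (hQ mustar).ne' hstar]
  refine ⟨fun μ ↦ hden μ ▸ div_pos (hQ μ) hsq, hgap, fun μ ↦ ?_, ?_⟩
  · rw [hmax, hFQ]
    exact mul_le_mul_of_nonneg_left (sq_div_binaryForm_le hdet (hQ μ) α b) hsq.le
  · rw [hmax, binaryForm, ← mul_div_assoc]
    congr 1 <;> ring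

end LinearOrderedField

/-- Optimal μ with data-dependent prior, Eq. (26): For `A > 0`, `α ≥ 0`,
`b ≥ 0`, `α₁ ∈ ℝ` with `|α₁|·b < A²` and `α + b > 0`, the function
`F(μ) = (μα+(1−μ)b)²/(μ²+(1−μ)²+2μ(1−μ)(α₁/A²)b)` (whose denominator is positive on
`[0,1]`) is maximized over `[0,1]` at `μ* = (A²α−α₁b²)/((A²−α₁b)(α+b))`
(well-defined since `A²−α₁b > 0`), assumed to lie in `[0,1]`, with
`F(μ*) = (A⁴(α²+b²)−2A²α·α₁·b²)/(A⁴−α₁²b²)`. -/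
theorem stmt18 (A α b α₁ : ℝ) (hA : 0 < A) (hα : 0 ≤ α) (hb : 0 ≤ b)
    (h1 : |α₁| * b < A ^ 2) (h2 : 0 < α + b)
    (F : ℝ → ℝ)
    (hF : ∀ μ : ℝ, F μ =
      (μ * α + (1 - μ) * b) ^ 2 /
        (μ ^ 2 + (1 - μ) ^ 2 + 2 * μ * (1 - μ) * (α₁ / A ^ 2) * b))
    (mustar : ℝ)
    (hm : mustar = (A ^ 2 * α - α₁ * b ^ 2) / ((A ^ 2 - α₁ * b) * (α + b)))
    (hms : mustar ∈ Set.Icc (0 : ℝ) 1) :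
    (∀ μ ∈ Set.Icc (0 : ℝ) 1,
      0 < μ ^ 2 + (1 - μ) ^ 2 + 2 * μ * (1 - μ) * (α₁ / A ^ 2) * b) ∧
    0 < A ^ 2 - α₁ * b ∧
    (∀ μ ∈ Set.Icc (0 : ℝ) 1, F μ ≤ F mustar) ∧
    F mustar = (A ^ 4 * (α ^ 2 + b ^ 2) - 2 * A ^ 2 * α * α₁ * b ^ 2) /
      (A ^ 4 - α₁ ^ 2 * b ^ 2) := by
  have h1' : |α₁ * b| < A ^ 2 := by rwa [abs_mul, abs_of_nonneg hb]
  obtain ⟨hpos, hgap, hmax, hval⟩ := stmt18_general A α b α₁ h1' h2.ne' F hF mustar hm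
  exact ⟨fun μ _ ↦ hpos μ, hgap, fun μ _ ↦ hmax μ, hval⟩
end
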